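/- Let f ∈ C²(S¹×ℝ×ℝ, ℝ), let e₋ and e₊ be equilibria of u_t = u_xx + f(x,u,u_x), let m ∈ ℕ be even, and let u be a bounded classical solution on S¹×ℝ. Assume there exist real numbers λ⁻ > 0 > λ⁺ and functions φ⁻, φ⁺ ∈ C¹(S¹), each having exactly m zeros, all of them simple, such that ‖u(·,t) − e₋ − e^{λ⁻ t} φ⁻‖_{C¹(S¹)} = o(e^{λ⁻ t}) as t → −∞ and ‖u(·,t) − e₊ − e^{λ⁺ t} φ⁺‖_{C¹(S¹)} = o(e^{λ⁺ t}) as t → +∞. Then: (1) for every (x,t) ∈ S¹×ℝ, (u(x,t), u_x(x,t)) ≠ (e₋(x), e₋'(x)) and (u(x,t), u_x(x,t)) ≠ (e₊(x), e₊'(x)); and (2) the map (x,t) ∈ S¹×ℝ ↦ (x, u(x,t), u_x(x,t)) is injective. -/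

import Mathlib

open Set

/-- An equilibrium of `u_t = u_xx + f(x,u,u_x)` on the circle. -/
def IsEquilibrium (f : ℝ → ℝ → ℝ → ℝ) (e : ℝ → ℝ) : Prop :=
  Function.Periodic e 1 ∧ ContDiff ℝ 2 e ∧
    ∀ x, deriv (deriv e) x + f x (e x) (deriv e x) = 0

/-- A classical solution `u` (written `u t x` for `u(x,t)`) on `S¹ × ℝ` of
`u_t = u_xx + f(x,u,u_x)`. -/
def IsClassicalSolution (f : ℝ → ℝ → ℝ → ℝ) (u : ℝ → ℝ → ℝ) : Prop :=
  (∀ t, Function.Periodic (u t) 1)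
  ∧ Continuous (fun p : ℝ × ℝ => u p.1 p.2)
  ∧ (∀ t x : ℝ, DifferentiableAt ℝ (fun s => u s x) t)
  ∧ (∀ t, Differentiable ℝ (u t))
  ∧ (∀ t, Differentiable ℝ (deriv (u t)))
  ∧ Continuous (fun p : ℝ × ℝ => deriv (fun s => u s p.2) p.1)
  ∧ Continuous (fun p : ℝ × ℝ => deriv (u p.1) p.2)
  ∧ Continuous (fun p : ℝ × ℝ => deriv (deriv (u p.1)) p.2)
  ∧ ∀ t x : ℝ, deriv (fun s => u s x) t
      = deriv (deriv (u t)) x + f x (u t x) (deriv (u t) x)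

/-- A `1`-periodic function has exactly `m` zeros on the circle (i.e. in a fundamental
domain `[0,1)`), all of them simple. -/
def HasExactlySimpleZeros (φ : ℝ → ℝ) (m : ℕ) : Prop :=
  (∀ x, φ x = 0 → deriv φ x ≠ 0) ∧ ({x ∈ Ico (0:ℝ) 1 | φ x = 0}.ncard = m)

def Alt (g : ℝ → ℝ) (k : ℕ) : Prop :=
  ∃ x : ℤ → ℝ, (∀ i, x i < x (i + 1)) ∧ (∀ i, x (i + k) = x i + 1) ∧
    ∀ i, g (x i) * g (x (i + 1)) < 0

lemma alt_scale {g : ℝ → ℝ} {k : ℕ} {r : ℝ} (hr : r ≠ 0) (h : Alt g k) :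
    Alt (fun x => r * g x) k := by
  obtain ⟨x, h1, h2, h3⟩ := h
  refine ⟨x, h1, h2, fun i => ?_⟩
  have : 0 < r * r := mul_self_pos.2 hr
  have := mul_pos_of_neg_of_neg (h3 i) (neg_neg_of_pos this)
  simp only
  nlinarith

lemma alt_neg {g : ℝ → ℝ} {k : ℕ} (h : Alt g k) : Alt (fun x => - g x) k := by
  simpa using alt_scale (r := -1) (by norm_num) h

lemma shift_int {x : ℤ → ℝ} {k : ℕ} (h : ∀ i, x (i + k) = x i + 1) (n : ℤ) :
    ∀ i, x (i + k * n) = x i + n := by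
  induction n using Int.induction_on with
  | zero => simp
  | succ n ih =>
    intro i
    have := h (i + k * n)
    rw [ih] at this
    rw [show i + (k:ℤ) * (n + 1) = i + k * n + k by ring, this]; push_cast; ring
  | pred n ih =>
    intro i
    have := h (i + k * (-n - 1))
    rw [show i + (k:ℤ) * (-n - 1) + k = i + k * (-n) by ring, ih] at this
    push_cast at this ⊢; linarith

lemma alt_pos {g : ℝ → ℝ} {k : ℕ} (h : Alt g k) : 0 < k := by
  obtain ⟨x, h1, h2, h3⟩ := h
  rcases Nat.eq_zero_or_pos k with rfl | h
  · have := h2 0; simp at this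
  · exact h

lemma per_int {g : ℝ → ℝ} (hg : Function.Periodic g 1) (x : ℝ) (n : ℤ) : g (x + n) = g x := by
  simpa using hg.int_mul n x

lemma alt_mk {g : ℝ → ℝ} (hg : Function.Periodic g 1) {k : ℕ} (hk : 0 < k) (p : ℕ → ℝ)
    (h1 : ∀ r < k, p r < p (r + 1)) (h2 : p k = p 0 + 1)
    (h3 : ∀ r < k, g (p r) * g (p (r + 1)) < 0) : Alt g k := by
  have hk' : (0:ℤ) < k := by exact_mod_cast hk
  set x : ℤ → ℝ := fun i => p (i % k).toNat + ((i / k : ℤ) : ℝ) with hx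
  have key : ∀ i : ℤ, ∃ r < k, ∃ q : ℤ, x i = p r + q ∧ x (i + 1) = p (r + 1) + q := by
    intro i
    have hr0 := Int.emod_nonneg i hk'.ne'
    have hr1 := Int.emod_lt_of_pos i hk'
    have hdm := Int.emod_add_mul_ediv i k
    refine ⟨(i % k).toNat, by omega, i / k, rfl, ?_⟩
    by_cases hc : i % k + 1 = k
    · have e1 : (i + 1) % k = 0 := by
        rw [show i + 1 = 0 + k * (i / k + 1) by linarith]; simp
      have e2 : (i + 1) / k = i / k + 1 := by
        rw [show i + 1 = 0 + k * (i / k + 1) by linarith, Int.add_mul_ediv_left _ _ hk'.ne']; simp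
      have e3 : (i % k).toNat + 1 = k := by omega
      simp only [hx, e1, e2, e3, h2]; push_cast; ring_nf
    · have e0 : i + 1 = (i % k + 1) + k * (i / k) := by linarith
      have e1 : (i + 1) % k = i % k + 1 := by
        rw [e0, Int.add_mul_emod_self_left]; exact Int.emod_eq_of_lt (by omega) (by omega)
      have e2 : (i + 1) / k = i / k := by
        conv_lhs => rw [e0, Int.add_mul_ediv_left _ _ hk'.ne']
        rw [Int.ediv_eq_zero_of_lt (by omega) (by omega)]; simp
      have e3 : (i % k + 1).toNat = (i % k).toNat + 1 := by omega
      simp only [hx, e1, e2, e3]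
  refine ⟨x, fun i => ?_, fun i => ?_, fun i => ?_⟩
  · obtain ⟨r, hr, q, e1, e2⟩ := key i
    rw [e1, e2]; linarith [h1 r hr]
  · have e1 : (i + k) % k = i % k := by simp
    have e2 : (i + k) / k = i / k + 1 := by
      simpa using Int.add_mul_ediv_left i 1 hk'.ne'
    simp only [hx, e1, e2]; push_cast; ring
  · obtain ⟨r, hr, q, e1, e2⟩ := key i
    rw [e1, e2, per_int hg, per_int hg]; exact h3 r hr

lemma alt_min {g : ℝ → ℝ} (hg : Function.Periodic g 1) {k : ℕ} (hk : 0 < k) {x : ℤ → ℝ}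
    (h2 : ∀ i, x (i + k) = x i + 1) (h3 : ∀ i, g (x i) * g (x (i + 1)) < 0) :
    ∃ μ > 0, ∀ i, μ ≤ |g (x i)| := by
  have hk' : (0:ℤ) < k := by exact_mod_cast hk
  have hne : ∀ i, 0 < |g (x i)| := fun i => abs_pos.2 (left_ne_zero_of_mul (h3 i).ne)
  obtain ⟨r, hr, hmin⟩ := Finset.exists_min_image (Finset.range k) (fun r : ℕ => |g (x r)|)
    ⟨0, by simpa using hk⟩
  refine ⟨_, hne r, fun i => ?_⟩
  have hr0 := Int.emod_nonneg i hk'.ne'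
  have hr1 := Int.emod_lt_of_pos i hk'
  have hdm := Int.emod_add_mul_ediv i k
  have := hmin (i % k).toNat (by simp; omega)
  have e : ((i % k).toNat : ℤ) = i % k := by omega
  have e2 : x i = x (i % k) + ((i / k : ℤ) : ℝ) := by
    rw [← shift_int h2, hdm]
  rw [e2, per_int hg]
  simpa [e] using this

lemma same_sign {a b μ : ℝ} (h : μ ≤ |a|) (hb : |b - a| < μ) : 0 < b * a := by
  rcases abs_cases a with ⟨e, h1⟩ | ⟨e, h1⟩ <;> rw [e] at h <;> rw [abs_lt] at hb
  · exact mul_pos (by linarith) (by linarith [abs_nonneg (b-a), abs_lt.2 hb])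
  · exact mul_pos_of_neg_of_neg (by linarith) (by linarith)

lemma prod_neg {a b a' b' : ℝ} (h : a * b < 0) (ha : 0 < a' * a) (hb : 0 < b' * b) :
    a' * b' < 0 := by
  rcases mul_neg_iff.1 h with ⟨p, q⟩ | ⟨p, q⟩
  · have := pos_of_mul_pos_left ha p.le
    have : b' < 0 := by by_contra hh; push Not at hh; nlinarith
    nlinarith
  · have : 0 < b' := pos_of_mul_pos_left hb q.le
    have : a' < 0 := by by_contra hh; push Not at hh; nlinarith
    nlinarith

lemma alt_pert0 {g : ℝ → ℝ} (hg : Function.Periodic g 1) {k : ℕ} (h : Alt g k) :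
    ∃ ε > 0, ∀ G : ℝ → ℝ, (∀ x, |G x - g x| ≤ ε) → Alt G k := by
  have hk := alt_pos h
  obtain ⟨x, h1, h2, h3⟩ := h
  obtain ⟨μ, hμ, hm⟩ := alt_min hg hk h2 h3
  refine ⟨μ / 2, by positivity, fun G hG => ⟨x, h1, h2, fun i => ?_⟩⟩
  have : ∀ i, 0 < G (x i) * g (x i) := fun i =>
    same_sign (hm i) (lt_of_le_of_lt (hG (x i)) (by linarith))
  exact prod_neg (h3 i) (this i) (this (i+1))

lemma alt_zeros {g : ℝ → ℝ} (hg : Function.Periodic g 1) (hc : Continuous g) {k : ℕ}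
    (h : Alt g k) (hfin : {x ∈ Ico (0:ℝ) 1 | g x = 0}.Finite) :
    k ≤ {x ∈ Ico (0:ℝ) 1 | g x = 0}.ncard := by
  obtain ⟨x, h1, h2, h3⟩ := h
  have hz : ∀ i, ∃ z, x i < z ∧ z < x (i + 1) ∧ g z = 0 := by
    intro i
    rcases mul_neg_iff.1 (h3 i) with ⟨p, q⟩ | ⟨p, q⟩
    · obtain ⟨z, hz, e⟩ := intermediate_value_Ioo' (h1 i).le hc.continuousOn ⟨q, p⟩
      exact ⟨z, hz.1, hz.2, e⟩
    · obtain ⟨z, hz, e⟩ := intermediate_value_Ioo (h1 i).le hc.continuousOn ⟨p, q⟩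
      exact ⟨z, hz.1, hz.2, e⟩
  choose z z1 z2 z3 using hz
  have hxm : StrictMono x := strictMono_int_of_lt_succ h1
  have hzm : StrictMono z := strictMono_int_of_lt_succ fun i => (z2 i).trans (z1 (i+1))
  have hinj : Set.InjOn (fun r : ℕ => Int.fract (z r)) (Finset.range k : Set ℕ) := by
    intro a ha b hb hab
    simp only [Finset.coe_range, mem_Iio] at ha hb
    obtain ⟨q, hq⟩ := Int.fract_eq_fract.1 hab
    have ba : ∀ r : ℕ, r < k → x 0 < z r ∧ z r < x 0 + 1 := by
      intro r hr
      refine ⟨lt_of_le_of_lt (hxm.monotone (by omega)) (z1 r), ?_⟩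
      rw [← h2 0]
      exact lt_of_lt_of_le (z2 r) (hxm.monotone (by omega))
    have h4 := ba a ha
    have h5 := ba b hb
    have : q = 0 := by
      have u1 : (q:ℝ) < 1 := by linarith
      have u2 : (-1:ℝ) < q := by linarith
      have u1' : q < 1 := by exact_mod_cast u1
      have u2' : -1 < q := by exact_mod_cast u2
      omega
    rw [this] at hq
    have : z a = z b := by push_cast at hq; linarith
    exact_mod_cast hzm.injective this
  have := Finset.card_image_of_injOn hinj
  rw [Finset.card_range] at this
  rw [← this, ← Set.ncard_coe_finset]
  apply Set.ncard_le_ncard _ hfin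
  intro y hy
  simp only [Finset.coe_image, Finset.coe_range, mem_image] at hy
  obtain ⟨r, hr, rfl⟩ := hy
  refine ⟨⟨Int.fract_nonneg _, Int.fract_lt_one _⟩, ?_⟩
  have := per_int hg (Int.fract (z r)) ⌊z r⌋
  rw [Int.fract_add_floor] at this
  rw [← this, z3]

lemma zero_floor {g : ℝ → ℝ} (hg : Function.Periodic g 1) (x : ℝ) : g (Int.fract x) = g x := by
  have := per_int hg (Int.fract x) ⌊x⌋
  rwa [Int.fract_add_floor, eq_comm] at this

lemma per_bound_below {F : ℝ → ℝ} (hF : Function.Periodic F 1) (hc : Continuous F)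
    (hpos : ∀ x, 0 < F x) : ∃ η > 0, ∀ x, η ≤ F x := by
  obtain ⟨y, hy, hmin⟩ := (isCompact_Icc (a := (0:ℝ)) (b := 1)).exists_isMinOn
    ⟨0, by simp⟩ hc.continuousOn
  refine ⟨F y, hpos y, fun x => ?_⟩
  rw [← zero_floor hF x]
  exact hmin ⟨Int.fract_nonneg _, (Int.fract_lt_one _).le⟩

lemma per_unif {F : ℝ → ℝ} (hF : Function.Periodic F 1) (hc : Continuous F) {η : ℝ} (hη : 0 < η) :
    ∃ ρ > 0, ∀ x y, |x - y| ≤ ρ → |F x - F y| ≤ η := by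
  have hu := (isCompact_Icc (a := (-1:ℝ)) (b := 2)).uniformContinuousOn_of_continuous
    hc.continuousOn
  rw [Metric.uniformContinuousOn_iff] at hu
  obtain ⟨d, hd, h⟩ := hu η hη
  refine ⟨min (d / 2) 1, by positivity, fun x y hxy => ?_⟩
  have h1 := hxy.trans (min_le_left _ _)
  have h2 := hxy.trans (min_le_right _ _)
  have e : F y = F (y - ⌊x⌋) := by
    have := per_int hF (y - ⌊x⌋) ⌊x⌋
    rw [← this]; congr 1; ring
  rw [← zero_floor hF x, e]
  have f0 := Int.fract_nonneg x
  have f1 := Int.fract_lt_one x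
  have f2 := Int.self_sub_floor x
  have e3 : Int.fract x - (y - ⌊x⌋) = x - y := by rw [← f2]; ring
  have hy : |Int.fract x - (y - ⌊x⌋)| ≤ 1 := by rw [e3]; exact h2
  rw [abs_le] at hy
  have := h (Int.fract x) ⟨by linarith, by linarith⟩ (y - ⌊x⌋) ⟨by linarith, by linarith⟩
    (by rw [Real.dist_eq, e3]; linarith)
  rw [Real.dist_eq] at this
  exact this.le

lemma mvt_lower {g g' : ℝ → ℝ} (hd : ∀ x, HasDerivAt g (g' x) x) {a b c : ℝ} (hab : a ≤ b)
    (h : ∀ x ∈ Icc a b, c ≤ g' x) : c * (b - a) ≤ g b - g a := by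
  rcases hab.eq_or_lt with rfl | hab
  · simp
  obtain ⟨ξ, hξ, e⟩ := exists_hasDerivAt_eq_slope g g' hab
    (fun x _ => (hd x).continuousAt.continuousWithinAt) (fun x _ => hd x)
  have := h ξ ⟨hξ.1.le, hξ.2.le⟩
  rw [e, le_div_iff₀ (by linarith)] at this
  exact this

lemma stab {g g' : ℝ → ℝ} (hg : Function.Periodic g 1) (hg' : Function.Periodic g' 1)
    (hd : ∀ x, HasDerivAt g (g' x) x) (hc' : Continuous g')
    (hs : ∀ x, ¬ (g x = 0 ∧ g' x = 0)) :
    ∃ ε > 0, ∀ G G' : ℝ → ℝ, Function.Periodic G 1 → (∀ x, HasDerivAt G (G' x) x) →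
      (∀ x, |G x - g x| ≤ ε) → (∀ x, |G' x - g' x| ≤ ε) → ∀ k, Alt G k → Alt g k := by
  have hcg : Continuous g := continuous_iff_continuousAt.2 fun x => (hd x).continuousAt
  obtain ⟨η4, hη4, hlow⟩ := per_bound_below (F := fun x => |g x| + |g' x|)
    (fun x => by simp [hg x, hg' x]) (by fun_prop) (fun x => by
      have h1 := abs_nonneg (g x)
      have h2 := abs_nonneg (g' x)
      rcases h1.eq_or_lt with h | h
      · rcases h2.eq_or_lt with h' | h'
        · exact absurd ⟨abs_eq_zero.1 h.symm, abs_eq_zero.1 h'.symm⟩ (hs x)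
        · linarith
      · linarith)
  set η := η4 / 4 with hηdef
  have hη : 0 < η := by positivity
  obtain ⟨ρ, hρ, hunif⟩ := per_unif hg' hc' hη
  set ε := min η (η * ρ / 3) with hε
  have hε0 : 0 < ε := by positivity
  have hεη : ε ≤ η := min_le_left _ _
  set s := ε / η with hsdef
  have hs0 : 0 < s := by positivity
  have hsε : η * s = ε := by rw [hsdef]; field_simp
  have hsρ : 3 * s ≤ ρ := by
    have : ε ≤ η * ρ / 3 := min_le_right _ _
    rw [← hsε] at this
    have : η * (3 * s) ≤ η * ρ := by linarith
    exact le_of_mul_le_mul_left this hη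
  refine ⟨ε, hε0, fun G G' hG hdG hC0 hC1 k hAlt => ?_⟩
  -- monotonicity near small values
  have hmono : ∀ z, |g z| ≤ ε → (∀ y, |z - y| ≤ ρ → 2 * η ≤ g' y) ∨
      (∀ y, |z - y| ≤ ρ → 2 * η ≤ - g' y) := by
    intro z hz
    have h1 := hlow z
    rcases abs_cases (g' z) with ⟨e, _⟩ | ⟨e, _⟩
    · left; intro y hy
      have := abs_le.1 (hunif z y hy)
      linarith [this.2]
    · right; intro y hy
      have := abs_le.1 (hunif z y hy)
      linarith [this.1]
  classical
  set T : ℝ → ℝ := fun x => if ε < |g x| then x else x + s * (Real.sign (G x) * Real.sign (g' x))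
    with hT
  have T_sign : ∀ x, G x ≠ 0 → 0 < g (T x) * G x := by
    intro x hx
    by_cases hc : ε < |g x|
    · have e : T x = x := by simp [hT, hc]
      rw [e, mul_comm]
      exact same_sign le_rfl (lt_of_le_of_lt (hC0 x) hc)
    · have e : T x = x + s * (Real.sign (G x) * Real.sign (g' x)) := by simp [hT, hc]
      have hc1 : |g x| ≤ ε := not_lt.1 hc
      have hc2 := abs_le.1 hc1
      have hC := abs_le.1 (hC0 x)
      rw [e]
      rcases hmono x hc1 with hm | hm
      · have hp : 0 < g' x := by have := hm x (by simpa using hρ.le); linarith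
        rw [Real.sign_of_pos hp]
        rcases lt_or_gt_of_ne hx with hx | hx
        · rw [Real.sign_of_neg hx]
          have := mvt_lower hd (a := x + s * (-1 * 1)) (b := x) (c := 2 * η) (by linarith)
            (fun y hy => hm y (by rw [abs_le]; constructor <;> linarith [hy.1, hy.2]))
          refine mul_pos_of_neg_of_neg ?_ hx
          nlinarith
        · rw [Real.sign_of_pos hx]
          have := mvt_lower hd (a := x) (b := x + s * (1 * 1)) (c := 2 * η) (by linarith)
            (fun y hy => hm y (by rw [abs_le]; constructor <;> linarith [hy.1, hy.2]))
          refine mul_pos ?_ hx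
          nlinarith
      · have hp : g' x < 0 := by have := hm x (by simpa using hρ.le); linarith
        rw [Real.sign_of_neg hp]
        have hd' : ∀ x, HasDerivAt (fun y => - g y) (- g' x) x := fun x => (hd x).neg
        rcases lt_or_gt_of_ne hx with hx | hx
        · rw [Real.sign_of_neg hx]
          have := mvt_lower hd' (a := x) (b := x + s * (-1 * -1)) (c := 2 * η) (by linarith)
            (fun y hy => hm y (by rw [abs_le]; constructor <;> linarith [hy.1, hy.2]))
          refine mul_pos_of_neg_of_neg ?_ hx
          nlinarith
        · rw [Real.sign_of_pos hx]
          have := mvt_lower hd' (a := x + s * (1 * -1)) (b := x) (c := 2 * η) (by linarith)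
            (fun y hy => hm y (by rw [abs_le]; constructor <;> linarith [hy.1, hy.2]))
          refine mul_pos ?_ hx
          nlinarith
  have T_dist : ∀ x, x - s ≤ T x ∧ T x ≤ x + s := by
    intro x
    by_cases hc : ε < |g x|
    · have e : T x = x := by simp [hT, hc]
      rw [e]; constructor <;> linarith
    · have e : T x = x + s * (Real.sign (G x) * Real.sign (g' x)) := by simp [hT, hc]
      rw [e]
      rcases Real.sign_apply_eq (G x) with h | h | h <;>
      rcases Real.sign_apply_eq (g' x) with h' | h' | h' <;> rw [h, h'] <;> constructor <;> linarith
  have T_mono : ∀ x y, x < y → G x * G y < 0 → T x ≤ T y := by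
    intro x y hxy hG2
    by_cases hfar : 2 * s ≤ y - x
    · linarith [(T_dist x).2, (T_dist y).1]
    push Not at hfar
    by_cases hnm : ε < |g x| ∧ ε < |g y|
    · have e1 : T x = x := by simp [hT, hnm.1]
      have e2 : T y = y := by simp [hT, hnm.2]
      rw [e1, e2]; exact hxy.le
    have hz : ∃ z, |g z| ≤ ε ∧ x ≤ z ∧ z ≤ y := by
      by_cases h : ε < |g x|
      · refine ⟨y, not_lt.1 fun h' => hnm ⟨h, h'⟩, hxy.le, le_rfl⟩
      · exact ⟨x, not_lt.1 h, le_rfl, hxy.le⟩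
    obtain ⟨z, hz, hz1, hz2⟩ := hz
    suffices T x ≤ x ∧ y ≤ T y by linarith
    rcases hmono z hz with hm | hm
    · have hm' : ∀ w ∈ Icc x y, 2 * η ≤ g' w := fun w hw =>
        hm w (by rw [abs_le]; constructor <;> linarith [hw.1, hw.2])
      have := mvt_lower hdG (a := x) (b := y) (c := η) hxy.le
        (fun w hw => by have := abs_le.1 (hC1 w); linarith [hm' w hw])
      have hlt : G x < G y := by nlinarith
      have hx0 : G x < 0 := by
        by_contra h; push Not at h; nlinarith
      have hy0 : 0 < G y := by
        by_contra h; push Not at h; nlinarith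
      have p1 : 0 < g' x := by linarith [hm' x ⟨le_rfl, hxy.le⟩]
      have p2 : 0 < g' y := by linarith [hm' y ⟨hxy.le, le_rfl⟩]
      simp only [hT, Real.sign_of_pos p1, Real.sign_of_pos p2, Real.sign_of_neg hx0,
        Real.sign_of_pos hy0]
      constructor <;> split_ifs <;> linarith
    · have hm' : ∀ w ∈ Icc x y, 2 * η ≤ - g' w := fun w hw =>
        hm w (by rw [abs_le]; constructor <;> linarith [hw.1, hw.2])
      have := mvt_lower (g := fun y => - G y) (g' := fun y => - G' y)
        (fun x => (hdG x).neg) (a := x) (b := y) (c := η) hxy.le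
        (fun w hw => by have := abs_le.1 (hC1 w); linarith [hm' w hw])
      have hlt : G y < G x := by nlinarith
      have hx0 : 0 < G x := by
        by_contra h; push Not at h; nlinarith
      have hy0 : G y < 0 := by
        by_contra h; push Not at h; nlinarith
      have p1 : g' x < 0 := by linarith [hm' x ⟨le_rfl, hxy.le⟩]
      have p2 : g' y < 0 := by linarith [hm' y ⟨hxy.le, le_rfl⟩]
      simp only [hT, Real.sign_of_neg p1, Real.sign_of_neg p2, Real.sign_of_pos hx0,
        Real.sign_of_neg hy0]
      constructor <;> split_ifs <;> linarith
  obtain ⟨x, h1, h2, h3⟩ := hAlt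
  have hpr : ∀ i, g (T (x i)) * g (T (x (i + 1))) < 0 := fun i =>
    prod_neg (h3 i) (T_sign _ (left_ne_zero_of_mul (h3 i).ne))
      (T_sign _ (right_ne_zero_of_mul (h3 i).ne))
  refine ⟨fun i => T (x i), fun i => ?_, fun i => ?_, hpr⟩
  · refine lt_of_le_of_ne (T_mono _ _ (h1 i) (h3 i)) fun e => ?_
    have := hpr i
    simp only at e
    rw [e] at this
    nlinarith [mul_self_nonneg (g (T (x (i+1))))]
  · have : ∀ y, T (y + 1) = T y + 1 := by
      intro y
      simp only [hT, hg y, hG y, hg' y]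
      split_ifs <;> ring
    simp only [h2, this]

lemma pos_right {g g' : ℝ → ℝ} (hd : ∀ x, HasDerivAt g (g' x) x) {z w : ℝ}
    (hz : g z = 0) (hp : 0 < g' z) (hne : ∀ y, z < y → y < w → g y ≠ 0) :
    ∀ y, z < y → y < w → 0 < g y := by
  intro y hy1 hy2
  have hcg : Continuous g := continuous_iff_continuousAt.2 fun x => (hd x).continuousAt
  have hev : ∀ᶠ y in nhdsWithin z (Ioi z), 0 < g y := by
    have := (hasDerivAt_iff_tendsto_slope.1 (hd z)).eventually (lt_mem_nhds hp)
    have h2 := this.filter_mono (nhdsWithin_mono z (fun y hy => ne_of_gt hy : Ioi z ⊆ {z}ᶜ))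
    filter_upwards [h2, self_mem_nhdsWithin] with y h hy
    rw [slope_def_field, hz, sub_zero] at h
    exact (div_pos_iff_of_pos_right (sub_pos.2 hy)).1 h
  obtain ⟨y1, h1, h2⟩ := (hev.and (Ioo_mem_nhdsGT hy1)).exists
  by_contra hcon
  push Not at hcon
  obtain ⟨q, hq, e⟩ := intermediate_value_Icc' h2.2.le hcg.continuousOn ⟨hcon, h1.le⟩
  exact hne q (by linarith [hq.1, h2.1]) (by linarith [hq.2]) e

lemma deriv_nonpos_of_pos_left {g g' : ℝ → ℝ} (hd : ∀ x, HasDerivAt g (g' x) x) {z w : ℝ}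
    (hzw : z < w) (hw : g w = 0) (hp : ∀ y, z < y → y < w → 0 < g y) : g' w ≤ 0 := by
  by_contra hcon
  push Not at hcon
  have := (hasDerivAt_iff_tendsto_slope.1 (hd w)).eventually (lt_mem_nhds hcon)
  have h2 := this.filter_mono (nhdsWithin_mono w (fun y hy => ne_of_lt hy : Iio w ⊆ {w}ᶜ))
  obtain ⟨y, h1, h3⟩ := (h2.and (Ioo_mem_nhdsLT hzw)).exists
  rw [slope_def_field, hw, sub_zero] at h1
  have := hp y h3.1 h3.2
  have := div_neg_of_pos_of_neg this (sub_neg.2 h3.2)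
  linarith

lemma sign_between {g g' : ℝ → ℝ} (hd : ∀ x, HasDerivAt g (g' x) x)
    (hs : ∀ x, g x = 0 → g' x ≠ 0) {z w : ℝ} (hzw : z < w)
    (hz : g z = 0) (hw : g w = 0) (hne : ∀ y, z < y → y < w → g y ≠ 0) :
    g' z * g' w < 0 ∧ 0 < g ((z + w) / 2) * g' z := by
  rcases lt_or_gt_of_ne (hs z hz) with h | h
  · have hp := pos_right (g := fun y => - g y) (g' := fun y => - g' y) (fun x => (hd x).neg)
      (by simp [hz]) (by linarith) (fun y a b => neg_ne_zero.2 (hne y a b))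
    have := deriv_nonpos_of_pos_left (fun x => (hd x).neg) hzw
      (by simp [hw]) hp
    have h0 := hp ((z + w) / 2) (by linarith) (by linarith)
    have : 0 < g' w := lt_of_le_of_ne (by linarith) (hs w hw).symm
    constructor <;> nlinarith
  · have hp := pos_right hd hz h hne
    have := deriv_nonpos_of_pos_left hd hzw hw hp
    have h0 := hp ((z + w) / 2) (by linarith) (by linarith)
    have : g' w < 0 := lt_of_le_of_ne (by linarith) (hs w hw)
    constructor <;> nlinarith

lemma zeros_alt {g g' : ℝ → ℝ} (hg : Function.Periodic g 1)
    (hd : ∀ x, HasDerivAt g (g' x) x) (hs : ∀ x, g x = 0 → g' x ≠ 0) {m : ℕ} (hm : 0 < m)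
    (hcard : {x ∈ Ico (0:ℝ) 1 | g x = 0}.ncard = m) : Alt g m := by
  have hfin : {x ∈ Ico (0:ℝ) 1 | g x = 0}.Finite := Set.finite_of_ncard_pos (by omega)
  set S := hfin.toFinset with hS
  have hSc : S.card = m := by rw [← hcard, Set.ncard_eq_toFinset_card _ hfin]
  have hmem : ∀ y, y ∈ S ↔ (0 ≤ y ∧ y < 1) ∧ g y = 0 := fun y => by simp [hS]
  set e := S.orderEmbOfFin hSc with he
  have hemem : ∀ r, e r ∈ S := fun r => Finset.orderEmbOfFin_mem S hSc r
  have hesurj : ∀ y ∈ S, ∃ r, e r = y := by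
    intro y hy
    have := Finset.range_orderEmbOfFin S hSc
    have : y ∈ Set.range (S.orderEmbOfFin hSc) := by rw [this]; exact hy
    exact this
  -- the sorted zeros
  set p : ℕ → ℝ := fun r => if h : r < m then e ⟨r, h⟩ else e ⟨0, hm⟩ + 1 with hp
  have p_lt : ∀ r (h : r < m), p r = e ⟨r, h⟩ := fun r h => by simp [hp, h]
  have p_m : p m = p 0 + 1 := by simp [hp, hm]
  have pz : ∀ r ≤ m, g (p r) = 0 := by
    intro r hr
    rcases hr.eq_or_lt with rfl | h
    · rw [p_m, p_lt 0 hm, hg]; exact ((hmem _).1 (hemem _)).2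
    · rw [p_lt r h]; exact ((hmem _).1 (hemem _)).2
  have pmono : ∀ r < m, p r < p (r + 1) := by
    intro r hr
    by_cases h : r + 1 < m
    · rw [p_lt r hr, p_lt _ h]; exact e.strictMono (by simp [Fin.lt_def])
    · have : r + 1 = m := by omega
      rw [this, p_m, p_lt r hr, p_lt 0 hm]
      linarith [((hmem _).1 (hemem ⟨r, hr⟩)).1.2, ((hmem _).1 (hemem ⟨0, hm⟩)).1.1]
  have pno : ∀ r < m, ∀ y, p r < y → y < p (r + 1) → g y ≠ 0 := by
    intro r hr y hy1 hy2 hy0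
    have b0 := ((hmem _).1 (hemem ⟨0, hm⟩)).1
    have br := ((hmem _).1 (hemem ⟨r, hr⟩)).1
    by_cases hy : y < 1
    · have hyS : y ∈ S := (hmem y).2 ⟨⟨by rw [p_lt r hr] at hy1; linarith, hy⟩, hy0⟩
      obtain ⟨q, rfl⟩ := hesurj y hyS
      rw [p_lt r hr] at hy1
      have h1 := e.lt_iff_lt.1 hy1
      simp only [Fin.lt_def] at h1
      rw [p_lt (r+1) (by omega)] at hy2
      have h2 := e.lt_iff_lt.1 hy2
      simp only [Fin.lt_def] at h2
      omega
    · push Not at hy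
      by_cases h : r + 1 < m
      · rw [p_lt _ h] at hy2
        linarith [((hmem _).1 (hemem ⟨r+1, h⟩)).1.2]
      · have : r + 1 = m := by omega
        rw [this, p_m, p_lt 0 hm] at hy2
        have hyS : y - 1 ∈ S := (hmem _).2 ⟨⟨by linarith, by linarith⟩, by
          have := hg (y - 1); rw [sub_add_cancel] at this; rw [← this, hy0]⟩
        obtain ⟨q, hq⟩ := hesurj _ hyS
        have : e q < e ⟨0, hm⟩ := by rw [hq]; linarith
        have h1 := e.lt_iff_lt.1 this
        simp [Fin.lt_def] at h1
  have key : ∀ r < m, _ := fun r hr =>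
    sign_between hd hs (pmono r hr) (pz r hr.le) (pz (r+1) hr) (pno r hr)
  have hg' : g' (p m) = g' (p 0) := by
    rw [p_m]
    have h1 := (hd (p 0 + 1)).comp_add_const (p 0) 1
    have h2 : (fun x => g (x + 1)) = g := funext hg
    rw [h2] at h1
    exact h1.unique (hd _)
  -- midpoints
  set c : ℕ → ℝ := fun r => if r < m then (p r + p (r + 1)) / 2 else (p 0 + p 1) / 2 + 1 with hcdef
  have c_lt : ∀ r < m, c r = (p r + p (r + 1)) / 2 := fun r h => by simp [hcdef, h]
  have c_m : c m = c 0 + 1 := by simp [hcdef, hm]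
  have csign : ∀ r ≤ m, 0 < g (c r) * g' (p r) := by
    intro r hr
    rcases hr.eq_or_lt with rfl | h
    · rw [c_m, hg, hg', c_lt 0 hm]; exact (key 0 hm).2
    · rw [c_lt r h]; exact (key r h).2
  refine alt_mk hg hm c (fun r hr => ?_) c_m (fun r hr =>
    prod_neg (key r hr).1 (csign r hr.le) (csign (r+1) hr))
  by_cases h : r + 1 < m
  · rw [c_lt r hr, c_lt _ h]; linarith [pmono r hr, pmono (r+1) h]
  · have : r + 1 = m := by omega
    rw [this, c_m, c_lt r hr, c_lt 0 hm, this, p_m]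
    have := pmono 0 hm
    have := pmono r hr
    have h3 : r + 1 = m := by omega
    rw [h3, p_m] at this
    linarith

lemma disc_back {Z p q : ℕ → ℝ → ℝ} {N k : ℕ} {h y : ℝ} (hh : 2 * N * h = 1) (n : ℕ)
    (hper : ∀ n, Function.Periodic (Z n) 1)
    (hrec : ∀ l < n, ∀ x, Z (l + 1) x = p l x * Z l (x + h) + q l x * Z l (x - h))
    (hp : ∀ l < n, ∀ x, 0 < p l x) (hq : ∀ l < n, ∀ x, 0 < q l x)
    (j : ℤ → ℤ) (h1 : ∀ i, j i < j (i + 1)) (h2 : ∀ i, j (i + k) = j i + N)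
    (h3 : ∀ i, Z n (y + (2 * j i + n) * h) * Z n (y + (2 * j (i + 1) + n) * h) < 0) :
    Alt (Z 0) k := by
  have hNh : ∀ (l : ℕ) (a : ℤ), Z l (y + (2 * ((a + N : ℤ) : ℝ) + l) * h)
      = Z l (y + (2 * (a : ℝ) + l) * h) := by
    intro l a
    rw [← hper l (y + (2 * (a : ℝ) + l) * h)]; congr 1; push_cast; linear_combination hh
  induction n generalizing j with
  | zero =>
    have hN : 0 < h := by
      by_contra hc; push Not at hc
      nlinarith [(Nat.cast_nonneg N : (0:ℝ) ≤ N)]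
    refine ⟨fun i => y + 2 * j i * h, fun i => ?_, fun i => ?_, fun i => ?_⟩
    · have : (j i : ℝ) < j (i + 1) := by exact_mod_cast h1 i
      simp only
      nlinarith
    · simp only [h2]; push_cast; linear_combination hh
    · simpa using h3 i
  | succ n ih =>
    have hpick : ∀ a : ℤ, Z (n + 1) (y + (2 * a + (n + 1 : ℕ)) * h) ≠ 0 →
        ∃ a' : ℤ, (a' = a ∨ a' = a + 1) ∧
        0 < Z n (y + (2 * a' + n) * h) * Z (n + 1) (y + (2 * a + (n + 1 : ℕ)) * h) := by
      intro a ha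
      have hr := hrec n (by omega) (y + (2 * a + (n + 1 : ℕ)) * h)
      have e1 : y + (2 * a + (n + 1 : ℕ)) * h + h = y + (2 * ((a + 1 : ℤ) : ℝ) + n) * h := by
        push_cast; ring
      have e2 : y + (2 * a + (n + 1 : ℕ)) * h - h = y + (2 * (a : ℝ) + n) * h := by
        push_cast; ring
      rw [e1, e2] at hr
      have hp' := hp n (by omega) (y + (2 * a + (n + 1 : ℕ)) * h)
      have hq' := hq n (by omega) (y + (2 * a + (n + 1 : ℕ)) * h)
      by_contra hcon
      push Not at hcon
      have c1 := hcon a (Or.inl rfl)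
      have c2 := hcon (a + 1) (Or.inr rfl)
      set A := Z (n + 1) (y + (2 * a + (n + 1 : ℕ)) * h)
      have : 0 < A * A := mul_self_pos.2 ha
      have : A * A = p n (y + (2 * a + (n + 1 : ℕ)) * h) * (Z n (y + (2 * ((a + 1 : ℤ) : ℝ) + n) * h) * A)
        + q n (y + (2 * a + (n + 1 : ℕ)) * h) * (Z n (y + (2 * (a : ℝ) + n) * h) * A) := by
        linear_combination A * hr
      nlinarith
    classical
    set j' : ℤ → ℤ := fun i => if 0 < Z n (y + (2 * j i + n) * h) *
      Z (n + 1) (y + (2 * j i + (n + 1 : ℕ)) * h) then j i else j i + 1 with hj'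
    have hne : ∀ i, Z (n + 1) (y + (2 * j i + (n + 1 : ℕ)) * h) ≠ 0 := fun i =>
      left_ne_zero_of_mul (h3 i).ne
    have hs : ∀ i, 0 < Z n (y + (2 * j' i + n) * h) *
        Z (n + 1) (y + (2 * j i + (n + 1 : ℕ)) * h) := by
      intro i
      by_cases hc : 0 < Z n (y + (2 * j i + n) * h) *
        Z (n + 1) (y + (2 * j i + (n + 1 : ℕ)) * h)
      · have : j' i = j i := by simp only [hj']; rw [if_pos hc]
        rw [this]; exact hc
      · have e : j' i = j i + 1 := by simp only [hj']; rw [if_neg hc]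
        obtain ⟨a', ha | ha, hb⟩ := hpick (j i) (hne i)
        · rw [ha] at hb; exact absurd hb hc
        · rw [e, ← ha]; exact hb
    have hb : ∀ i, j i ≤ j' i ∧ j' i ≤ j i + 1 := by
      intro i; simp only [hj']; split_ifs <;> omega
    have h3' : ∀ i, Z n (y + (2 * j' i + n) * h) * Z n (y + (2 * j' (i + 1) + n) * h) < 0 :=
      fun i => prod_neg (h3 i) (hs i) (hs (i + 1))
    refine ih (fun l hl => hrec l (by omega)) (fun l hl => hp l (by omega))
      (fun l hl => hq l (by omega)) j' (fun i => ?_) (fun i => ?_) h3'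
    · have := h1 i
      have := hb i
      have := hb (i + 1)
      refine lt_of_le_of_ne (by omega) fun e => ?_
      have := h3' i
      rw [e] at this
      nlinarith [mul_self_nonneg (Z n (y + (2 * (j' (i + 1) : ℝ) + n) * h))]
    · simp only [hj', h2]
      rw [hNh n (j i), hNh (n + 1) (j i)]
      split_ifs <;> ring

lemma disc_alt {Z p q : ℕ → ℝ → ℝ} {N k : ℕ} {h y : ℝ} (hh : 2 * N * h = 1) (n : ℕ)
    (hper : ∀ n, Function.Periodic (Z n) 1)
    (hrec : ∀ l < n, ∀ x, Z (l + 1) x = p l x * Z l (x + h) + q l x * Z l (x - h))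
    (hp : ∀ l < n, ∀ x, 0 < p l x) (hq : ∀ l < n, ∀ x, 0 < q l x)
    (x a : ℤ → ℝ) (h1 : ∀ i, x i < x (i + 1)) (h2 : ∀ i, x (i + k) = x i + 1)
    (ha : ∀ i, a i * a (i + 1) < 0)
    (h3 : ∀ (i l : ℤ), x i - 2 * h < y + (2 * l + n) * h → y + (2 * l + n) * h ≤ x i →
      0 < Z n (y + (2 * l + n) * h) * a i) :
    Alt (Z 0) k := by
  have hh0 : 0 < h := by
    by_contra hc; push Not at hc
    nlinarith [(Nat.cast_nonneg N : (0:ℝ) ≤ N)]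
  set j : ℤ → ℤ := fun i => ⌊(x i - y - n * h) / (2 * h)⌋ with hj
  have hs : ∀ i, 0 < Z n (y + (2 * j i + n) * h) * a i := by
    intro i
    have f1 := Int.floor_le ((x i - y - n * h) / (2 * h))
    have f2 := Int.lt_floor_add_one ((x i - y - n * h) / (2 * h))
    rw [le_div_iff₀ (by positivity)] at f1
    rw [div_lt_iff₀ (by positivity)] at f2
    apply h3 i (j i) <;> simp only [hj] <;> linarith
  have hpr : ∀ i, Z n (y + (2 * j i + n) * h) * Z n (y + (2 * j (i + 1) + n) * h) < 0 :=
    fun i => prod_neg (ha i) (hs i) (hs (i+1))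
  refine disc_back hh n hper hrec hp hq j (fun i => ?_) (fun i => ?_) hpr
  · refine lt_of_le_of_ne (Int.floor_le_floor ?_) fun e => ?_
    · have := h1 i
      gcongr
    · have := hpr i
      rw [e] at this
      nlinarith [mul_self_nonneg (Z n (y + (2 * (j (i + 1) : ℝ) + n) * h))]
  · simp only [hj, h2]
    rw [← Int.floor_add_natCast]
    congr 1
    field_simp
    linear_combination (-1) * hh

/-- One step of the discrete scheme. -/
noncomputable def St (h : ℝ) (b c F : ℝ → ℝ) (x : ℝ) : ℝ :=
  (1 + h ^ 2 / 2 * c x) * ((F (x + h) + F (x - h)) / 2) +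
    h ^ 2 / 2 * b x * ((F (x + h) - F (x - h)) / (2 * h))

/-- The discrete evolution. -/
noncomputable def Dn (h : ℝ) (b c : ℕ → ℝ → ℝ) (F : ℝ → ℝ) : ℕ → ℝ → ℝ
  | 0 => F
  | n + 1 => St h (b n) (c n) (Dn h b c F n)

def CB (K : ℝ) (b c : ℝ → ℝ) : Prop :=
  ∀ x y, |b x| ≤ K ∧ |c x| ≤ K ∧ |b x - b y| ≤ K * |x - y| ∧ |c x - c y| ≤ K * |x - y|

lemma dn_lin (h : ℝ) (b c : ℕ → ℝ → ℝ) (F G : ℝ → ℝ) (r : ℝ) (n : ℕ) (x : ℝ) :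
    Dn h b c (fun x => F x + r * G x) n x = Dn h b c F n x + r * Dn h b c G n x := by
  induction n generalizing x with
  | zero => rfl
  | succ n ih => simp only [Dn, St, ih]; ring

lemma dn_per {h : ℝ} {b c : ℕ → ℝ → ℝ} {F : ℝ → ℝ} (hb : ∀ n, Function.Periodic (b n) 1)
    (hc : ∀ n, Function.Periodic (c n) 1) (hF : Function.Periodic F 1) (n : ℕ) :
    Function.Periodic (Dn h b c F n) 1 := by
  induction n with
  | zero => exact hF
  | succ n ih =>
    intro x
    simp only [Dn, St, hb n x, hc n x]
    rw [show x + 1 + h = x + h + 1 by ring, show x + 1 - h = x - h + 1 by ring, ih, ih]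

lemma st_weights {h : ℝ} (b c F : ℝ → ℝ) (x : ℝ) :
    St h b c F x = ((1 + h ^ 2 / 2 * c x) / 2 + h * b x / 4) * F (x + h) +
      ((1 + h ^ 2 / 2 * c x) / 2 - h * b x / 4) * F (x - h) := by
  unfold St
  rcases eq_or_ne h 0 with rfl | hh
  · simp only [mul_zero, add_zero, sub_zero]; ring
  · field_simp; ring

lemma weights_pos {h K β γ : ℝ} (hh : 0 < h) (hh1 : h ≤ 1 / 2) (hK : h * K ≤ 1 / 2)
    (hβ : |β| ≤ K) (hγ : |γ| ≤ K) :
    0 < (1 + h ^ 2 / 2 * γ) / 2 + h * β / 4 ∧ 0 < (1 + h ^ 2 / 2 * γ) / 2 - h * β / 4 := by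
  rw [abs_le] at hβ hγ
  have a1 : h * β ≤ h * K := by gcongr; exact hβ.2
  have a2 : - (h * K) ≤ h * β := by nlinarith
  have a3 : - (h * K) ≤ h * γ := by nlinarith
  have a4 : - (h * (h * K)) ≤ h * (h * γ) := by nlinarith
  have a5 : h * (h * K) ≤ 1/2 * (1 / 2) := by
    have : 0 ≤ h * K := by nlinarith
    nlinarith
  constructor <;> nlinarith

lemma st_bound {h K M : ℝ} {b c F : ℝ → ℝ} (hh : 0 < h) (hh1 : h ≤ 1 / 2) (hK : h * K ≤ 1 / 2)
    (hb : CB K b c) (hF : ∀ x, |F x| ≤ M) (x : ℝ) :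
    |St h b c F x| ≤ (1 + K * (h ^ 2 / 2)) * M := by
  rw [st_weights]
  obtain ⟨b1, b2, -, -⟩ := hb x x
  obtain ⟨w1, w2⟩ := weights_pos hh hh1 hK b1 b2
  have hM : 0 ≤ M := (abs_nonneg _).trans (hF x)
  refine (abs_add_le _ _).trans ?_
  rw [abs_mul, abs_mul, abs_of_pos w1, abs_of_pos w2]
  have h1 := mul_le_mul_of_nonneg_left (hF (x + h)) w1.le
  have h2 := mul_le_mul_of_nonneg_left (hF (x - h)) w2.le
  have h3 : c x ≤ K := (abs_le.1 b2).2
  have h4 : (h ^ 2 / 2 * c x) * M ≤ (h ^ 2 / 2 * K) * M := by gcongr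
  linarith

lemma gron {a β : ℝ} (ha : 0 ≤ a) (hβ : 0 ≤ β) (n : ℕ) :
    (1 + a) * (β * n * (1 + a) ^ n) + β ≤ β * (n + 1 : ℕ) * (1 + a) ^ (n + 1) := by
  have : 1 ≤ (1 + a) ^ (n + 1) := one_le_pow₀ (by linarith)
  push_cast
  have e : (1 + a) * (β * n * (1 + a) ^ n) = β * n * (1 + a) ^ (n + 1) := by ring
  rw [e]
  nlinarith

lemma gron_exp {a β T : ℝ} (ha : 0 ≤ a) (hβ : 0 ≤ β) (n : ℕ) (hT : a * n ≤ T) :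
    β * n * (1 + a) ^ n ≤ β * n * Real.exp T := by
  have : (1 + a) ^ n ≤ Real.exp T := by
    calc (1 + a) ^ n ≤ (Real.exp a) ^ n := by
          gcongr; rw [add_comm]; exact Real.add_one_le_exp a
      _ = Real.exp (a * n) := by rw [← Real.exp_nat_mul]; ring_nf
      _ ≤ _ := Real.exp_le_exp.2 hT
  gcongr

set_option maxHeartbeats 2000000 in
lemma short_time {h K C1 : ℝ} {n : ℕ} {b c : ℕ → ℝ → ℝ} {ψ γ : ℝ → ℝ}
    (hh : 0 < h) (hh1 : h ≤ 1 / 2) (hK0 : 0 ≤ K) (hK : h * K ≤ 1 / 2) (hC1 : 0 ≤ C1)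
    (hCB : ∀ l < n, CB K (b l) (c l))
    (hγ : ∀ x, γ x = (ψ (x + h) - ψ (x - h)) / (2 * h))
    (h1 : ∀ x, |ψ x| ≤ 1) (h2 : ∀ x, |γ x| ≤ 1)
    (h3 : ∀ x, |(ψ (x + h) + ψ (x - h)) / 2 - ψ x| ≤ C1 * (h ^ 2 / 2))
    (h4 : ∀ x, |(γ (x + h) + γ (x - h)) / 2 - γ x| ≤ C1 * (h ^ 2 / 2))
    (h5 : ∀ x, |(γ (x + h) - γ (x - h)) / (2 * h)| ≤ C1) :
    ∀ l ≤ n, ∀ x,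
      |Dn h b c ψ l x - ψ x| ≤
        (C1 + K * C1 + 3 * K) * (h ^ 2 / 2) * l * (1 + 3 * K * (h ^ 2 / 2)) ^ l ∧
      |(Dn h b c ψ l (x + h) - Dn h b c ψ l (x - h)) / (2 * h) - γ x| ≤
        (C1 + K * C1 + 3 * K) * (h ^ 2 / 2) * l * (1 + 3 * K * (h ^ 2 / 2)) ^ l := by
  intro l
  set τ := h ^ 2 / 2 with hτ
  have hτ0 : 0 < τ := by positivity
  set B := C1 + K * C1 + 3 * K with hB
  have hB0 : 0 ≤ B := by positivity
  induction l with
  | zero =>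
    intro _ x
    simp [Dn, hγ]
  | succ l ih =>
    intro hl x
    have ih := ih (by omega)
    obtain hcb := hCB l (by omega)
    set F := Dn h b c ψ l with hF
    set e := B * τ * l * (1 + 3 * K * τ) ^ l with he
    have he0 : 0 ≤ e := by positivity
    have hg := gron (a := 3 * K * τ) (β := B * τ) (by positivity) (by positivity) l
    rw [← he] at hg
    have hF1 : ∀ x, |F x| ≤ 1 + e := fun x => by
      have := (ih x).1
      have := h1 x
      calc |F x| = |(F x - ψ x) + ψ x| := by ring_nf
        _ ≤ _ := (abs_add_le _ _).trans (by linarith)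
    set G : ℝ → ℝ := fun x => (F (x + h) - F (x - h)) / (2 * h) with hG
    have hG1 : ∀ x, |G x| ≤ 1 + e := fun x => by
      have := (ih x).2
      have := h2 x
      calc |G x| = |(G x - γ x) + γ x| := by ring_nf
        _ ≤ _ := (abs_add_le _ _).trans (by linarith)
    constructor
    · refine le_trans ?_ hg
      have e1 : Dn h b c ψ (l + 1) x - ψ x = St h (b l) (c l) (fun x => F x - ψ x) x
          + ((ψ (x + h) + ψ (x - h)) / 2 - ψ x)
          + τ * (c l x * ((ψ (x + h) + ψ (x - h)) / 2) + b l x * γ x) := by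
        simp only [Dn, St, ← hF, hγ, hτ]; ring
      obtain ⟨b1, b2, -, -⟩ := hcb x x
      have t1 := st_bound hh hh1 hK hcb (F := fun x => F x - ψ x) (fun x => (ih x).1) x
      have t2 := h3 x
      have t3 : |c l x * ((ψ (x + h) + ψ (x - h)) / 2) + b l x * γ x| ≤ K * 1 + K * 1 := by
        refine (abs_add_le _ _).trans ?_
        rw [abs_mul, abs_mul]
        have : |(ψ (x + h) + ψ (x - h)) / 2| ≤ 1 := by
          have a1 := abs_le.1 (h1 (x + h))
          have a2 := abs_le.1 (h1 (x - h))
          rw [abs_le]; constructor <;> linarith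
        gcongr
        exact h2 x
      rw [e1]
      refine (abs_add_le _ _).trans ?_
      refine (add_le_add (abs_add_le _ _) le_rfl).trans ?_
      rw [abs_mul, abs_of_pos hτ0]
      have t3' := mul_le_mul_of_nonneg_left t3 hτ0.le
      have : 0 ≤ K * τ * e := by positivity
      have : 0 ≤ K * C1 * τ := by positivity
      have : 0 ≤ K * τ := by positivity
      rw [← hτ] at t1
      nlinarith
    · refine le_trans ?_ hg
      set E : ℝ → ℝ := fun x => G x - γ x with hE
      have hE1 : ∀ x, |E x| ≤ e := fun x => (ih x).2
      set H : ℝ → ℝ := fun x => (F (x + h) + F (x - h)) / 2 with hH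
      have e1 : (Dn h b c ψ (l + 1) (x + h) - Dn h b c ψ (l + 1) (x - h)) / (2 * h) - γ x
          = ((1 / 2 + h * b l (x + h) / 4) * E (x + h) + (1 / 2 - h * b l (x - h) / 4) * E (x - h))
          + ((γ (x + h) + γ (x - h)) / 2 - γ x)
          + τ * (b l (x + h) * ((γ (x + h) - γ (x - h)) / (2 * h))
              + γ (x - h) * ((b l (x + h) - b l (x - h)) / (2 * h)))
          + τ * (c l (x + h) * ((G (x + h) + G (x - h)) / 2)
              + H (x - h) * ((c l (x + h) - c l (x - h)) / (2 * h))) := by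
        simp only [Dn, St, ← hF, hτ, hE, hG, hH]
        rw [show x + h - h = x by ring, show x - h + h = x by ring]
        field_simp
        ring
      obtain ⟨p1, p2, p3, p4⟩ := hcb (x + h) (x - h)
      obtain ⟨q1, q2, -, -⟩ := hcb (x - h) (x - h)
      have hxx : |x + h - (x - h)| = 2 * h := by
        rw [show x + h - (x - h) = 2 * h by ring, abs_of_pos (by positivity)]
      rw [hxx] at p3 p4
      have db : |(b l (x + h) - b l (x - h)) / (2 * h)| ≤ K := by
        rw [abs_div, abs_of_pos (by positivity : 0 < 2 * h), div_le_iff₀ (by positivity)]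
        exact p3
      have dc : |(c l (x + h) - c l (x - h)) / (2 * h)| ≤ K := by
        rw [abs_div, abs_of_pos (by positivity : 0 < 2 * h), div_le_iff₀ (by positivity)]
        exact p4
      have t1 : |(1 / 2 + h * b l (x + h) / 4) * E (x + h) + (1 / 2 - h * b l (x - h) / 4) * E (x - h)|
          ≤ (1 + K * τ) * e := by
        have w1 : 0 ≤ 1 / 2 + h * b l (x + h) / 4 := by
          have := (abs_le.1 p1).1
          nlinarith
        have w2 : 0 ≤ 1 / 2 - h * b l (x - h) / 4 := by
          have := (abs_le.1 q1).2
          nlinarith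
        refine (abs_add_le _ _).trans ?_
        rw [abs_mul, abs_mul, abs_of_nonneg w1, abs_of_nonneg w2]
        have a1 := mul_le_mul_of_nonneg_left (hE1 (x + h)) w1
        have a2 := mul_le_mul_of_nonneg_left (hE1 (x - h)) w2
        have a3 := (abs_le.1 p3).2
        have a4 : h * (b l (x + h) - b l (x - h)) / 4 ≤ K * τ := by
          rw [hτ]; nlinarith
        have a5 := mul_le_mul_of_nonneg_right a4 he0
        nlinarith
      have t2 := h4 x
      have t3 : |b l (x + h) * ((γ (x + h) - γ (x - h)) / (2 * h))
              + γ (x - h) * ((b l (x + h) - b l (x - h)) / (2 * h))| ≤ K * C1 + 1 * K := by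
        refine (abs_add_le _ _).trans ?_
        rw [abs_mul, abs_mul]
        gcongr
        · exact h5 x
        · exact h2 _
      have t4 : |c l (x + h) * ((G (x + h) + G (x - h)) / 2)
              + H (x - h) * ((c l (x + h) - c l (x - h)) / (2 * h))|
              ≤ K * (1 + e) + (1 + e) * K := by
        refine (abs_add_le _ _).trans ?_
        rw [abs_mul, abs_mul]
        have g1 : |(G (x + h) + G (x - h)) / 2| ≤ 1 + e := by
          have a1 := abs_le.1 (hG1 (x + h))
          have a2 := abs_le.1 (hG1 (x - h))
          rw [abs_le]; constructor <;> linarith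
        have g2 : |H (x - h)| ≤ 1 + e := by
          have a1 := abs_le.1 (hF1 (x - h + h))
          have a2 := abs_le.1 (hF1 (x - h - h))
          rw [abs_le]; simp only [hH]; constructor <;> linarith
        gcongr
      rw [e1]
      refine (abs_add_le _ _).trans ?_
      refine (add_le_add (abs_add_le _ _) le_rfl).trans ?_
      refine (add_le_add (add_le_add (abs_add_le _ _) le_rfl) le_rfl).trans ?_
      rw [abs_mul, abs_mul, abs_of_pos hτ0]
      have t3' := mul_le_mul_of_nonneg_left t3 hτ0.le
      have t4' := mul_le_mul_of_nonneg_left t4 hτ0.le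
      rw [hB]
      linarith

set_option maxHeartbeats 1000000 in
lemma tilt {K : ℝ} (hK0 : 0 ≤ K) : ∃ δ : ℝ, 0 < δ ∧ δ ≤ 1 ∧ ∃ h0 : ℝ, 0 < h0 ∧ ∀ h : ℝ, 0 < h → h ≤ h0 →
    ∀ (x0 : ℝ) (n : ℕ) (b c : ℕ → ℝ → ℝ), n * (h ^ 2 / 2) ≤ δ → (∀ l < n, CB K (b l) (c l)) →
    ∃ κ : ℝ, |κ| ≤ 1 ∧ ∃ W : ℝ → ℝ,
      W = Dn h b c (fun x => Real.sin (2 * Real.pi * (x - x0)) / (2 * Real.pi) + (-κ) * 1) n ∧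
      W x0 = 0 ∧ (∀ x, |W x| ≤ 2) ∧
      ∀ x, |x - x0| ≤ 1 / 8 → 1 / 4 ≤ (W (x + h) - W (x - h)) / (2 * h) := by
  set B := (40 : ℝ) + K * 40 + 3 * K with hB
  have hB0 : 0 < B := by positivity
  have hpi := Real.pi_gt_three
  have hpi4 := Real.pi_lt_d2
  set δ := min 1 (1 / (16 * (B * Real.exp (3 * K)))) with hδ
  have hδ0 : 0 < δ := by positivity
  refine ⟨δ, hδ0, min_le_left _ _, min (1 / 100) (1 / (2 * (K + 1))), by positivity, ?_⟩
  intro h hh hle x0 n b c hn hCB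
  have hh1 : h ≤ 1 / 100 := hle.trans (min_le_left _ _)
  have hhK : h * K ≤ 1 / 2 := by
    have : h ≤ 1 / (2 * (K + 1)) := hle.trans (min_le_right _ _)
    rw [le_div_iff₀ (by positivity)] at this
    nlinarith
  have hsmall : B * (h ^ 2 / 2) * n * (1 + 3 * K * (h ^ 2 / 2)) ^ n ≤ 1 / 16 := by
    have h1 := gron_exp (a := 3 * K * (h ^ 2 / 2)) (β := B * (h ^ 2 / 2)) (T := 3 * K)
      (by positivity) (by positivity) n (by
        have : n * (h ^ 2 / 2) ≤ 1 := hn.trans (min_le_left _ _)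
        nlinarith)
    refine h1.trans ?_
    have : n * (h ^ 2 / 2) ≤ 1 / (16 * (B * Real.exp (3 * K))) := hn.trans (min_le_right _ _)
    rw [le_div_iff₀ (by positivity)] at this
    nlinarith
  -- the constant data
  have hO := short_time (ψ := fun _ => 1) (γ := fun _ => 0) (C1 := 40) hh (by linarith) hK0 hhK
    (by norm_num) hCB (by simp) (by simp) (by simp) (by intro x; norm_num; positivity)
    (by intro x; norm_num; positivity) (by simp) n le_rfl
  -- the sine data
  set ψ : ℝ → ℝ := fun x => Real.sin (2 * Real.pi * (x - x0)) / (2 * Real.pi) with hψ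
  set q := Real.sin (2 * Real.pi * h) / (2 * Real.pi * h) with hq
  set γ : ℝ → ℝ := fun x => Real.cos (2 * Real.pi * (x - x0)) * q with hγ
  have hy0 : 0 < 2 * Real.pi * h := by positivity
  have hy1 : 2 * Real.pi * h ≤ 1 / 10 := by nlinarith
  have hq1 : q ≤ 1 := by
    rw [hq, div_le_one hy0]; exact Real.sin_le hy0.le
  have hq2 : 9 / 10 ≤ q := by
    rw [hq, le_div_iff₀ hy0]
    have := Real.sin_gt_sub_cube hy0
    have : (2 * Real.pi * h) ^ 3 ≤ (2 * Real.pi * h) * (1 / 100) := by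
      have : (2 * Real.pi * h) ^ 2 ≤ (1 / 10) ^ 2 := by gcongr
      nlinarith
    linarith
  have hcos : |Real.cos (2 * Real.pi * h) - 1| ≤ 40 * (h ^ 2 / 2) := by
    have h1 := Real.one_sub_sq_div_two_le_cos (x := 2 * Real.pi * h)
    have h2 := Real.cos_le_one (2 * Real.pi * h)
    rw [abs_le]; constructor
    · have : Real.pi ^ 2 ≤ 10 := by nlinarith
      have : Real.pi ^ 2 * h ^ 2 ≤ 10 * h ^ 2 := by gcongr
      nlinarith
    · have : 0 ≤ h ^ 2 := sq_nonneg h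
      linarith
  have ea : ∀ x, 2 * Real.pi * (x + h - x0) = 2 * Real.pi * (x - x0) + 2 * Real.pi * h :=
    fun x => by ring
  have es : ∀ x, 2 * Real.pi * (x - h - x0) = 2 * Real.pi * (x - x0) - 2 * Real.pi * h :=
    fun x => by ring
  have hψ1 : ∀ x, |ψ x| ≤ 1 := fun x => by
    simp only [hψ]
    rw [abs_div, abs_of_pos (by positivity : 0 < 2 * Real.pi), div_le_one (by positivity)]
    exact (Real.abs_sin_le_one _).trans (by linarith)
  have hγ1 : ∀ x, |γ x| ≤ 1 := fun x => by
    simp only [hγ]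
    rw [abs_mul]
    have := Real.abs_cos_le_one (2 * Real.pi * (x - x0))
    have : |q| ≤ 1 := abs_le.2 ⟨by linarith, hq1⟩
    exact mul_le_one₀ ‹_› (abs_nonneg _) ‹_›
  have hS := short_time (ψ := ψ) (γ := γ) (C1 := 40) hh (by linarith) hK0 hhK
    (by norm_num) hCB (by
      intro x
      simp only [hψ, hγ, hq, ea, es, Real.sin_add, Real.sin_sub]
      field_simp; ring) hψ1 hγ1 (by
      intro x
      have e : (ψ (x + h) + ψ (x - h)) / 2 - ψ x = (Real.cos (2 * Real.pi * h) - 1) * ψ x := by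
        simp only [hψ, ea, es, Real.sin_add, Real.sin_sub]; ring
      rw [e, abs_mul]
      calc _ ≤ 40 * (h ^ 2 / 2) * 1 := mul_le_mul hcos (hψ1 x) (abs_nonneg _) (by positivity)
        _ = _ := by ring) (by
      intro x
      have e : (γ (x + h) + γ (x - h)) / 2 - γ x = (Real.cos (2 * Real.pi * h) - 1) * γ x := by
        simp only [hγ, ea, es, Real.cos_add, Real.cos_sub]; ring
      rw [e, abs_mul]
      calc _ ≤ 40 * (h ^ 2 / 2) * 1 := mul_le_mul hcos (hγ1 x) (abs_nonneg _) (by positivity)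
        _ = _ := by ring) (by
      intro x
      have e : (γ (x + h) - γ (x - h)) / (2 * h)
          = - (Real.sin (2 * Real.pi * (x - x0)) * (2 * Real.pi)) * (q * q) := by
        simp only [hγ, hq, ea, es, Real.cos_add, Real.cos_sub]; field_simp; ring
      rw [e, abs_mul, abs_neg, abs_mul, abs_of_pos (by positivity : 0 < 2 * Real.pi),
        abs_of_nonneg (mul_self_nonneg q)]
      have := Real.abs_sin_le_one (2 * Real.pi * (x - x0))
      have h2 : q * q ≤ 1 := by nlinarith
      calc _ ≤ 1 * (2 * Real.pi) * 1 := by gcongr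
        _ ≤ _ := by linarith) n le_rfl
  set O := Dn h b c (fun _ => 1) n with hOd
  set P := Dn h b c ψ n with hPd
  rw [← hB] at hO hS
  have hO1 : ∀ x, |O x - 1| ≤ 1 / 16 := fun x => (hO x).1.trans hsmall
  have hO2 : ∀ x, |(O (x + h) - O (x - h)) / (2 * h) - 0| ≤ 1 / 16 :=
    fun x => (hO x).2.trans hsmall
  have hP1 : ∀ x, |P x - ψ x| ≤ 1 / 16 := fun x => (hS x).1.trans hsmall
  have hP2 : ∀ x, |(P (x + h) - P (x - h)) / (2 * h) - γ x| ≤ 1 / 16 :=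
    fun x => (hS x).2.trans hsmall
  have hO0 : 15 / 16 ≤ O x0 := by have := abs_le.1 (hO1 x0); linarith
  have hP0 : |P x0| ≤ 1 / 16 := by
    have := hP1 x0; simpa [hψ] using this
  set κ := P x0 / O x0 with hκ
  have hκ1 : |κ| ≤ 1 / 15 := by
    rw [hκ, abs_div, abs_of_pos (by linarith : 0 < O x0), div_le_iff₀ (by linarith)]
    linarith
  have hlin : ∀ x, Dn h b c (fun x => ψ x + (-κ) * 1) n x = P x + (-κ) * O x :=
    fun x => dn_lin h b c ψ (fun _ => 1) (-κ) n x
  refine ⟨κ, by linarith, _, rfl, ?_, ?_, ?_⟩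
  · rw [hlin, hκ]; field_simp; ring
  · intro x
    rw [hlin]
    have a1 := abs_le.1 (hP1 x)
    have a2 := abs_le.1 (hψ1 x)
    have a3 : |O x| ≤ 17 / 16 := by
      have := abs_le.1 (hO1 x); rw [abs_le]; constructor <;> linarith
    have a4 : |(-κ) * O x| ≤ 1 / 15 * (17 / 16) := by
      rw [abs_mul, abs_neg]; gcongr
    have a5 := abs_le.1 a4
    rw [abs_le]; constructor <;> linarith
  · intro x hx
    rw [hlin, hlin]
    have e : (P (x + h) + -κ * O (x + h) - (P (x - h) + -κ * O (x - h))) / (2 * h)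
      = (P (x + h) - P (x - h)) / (2 * h) + (-κ) * ((O (x + h) - O (x - h)) / (2 * h)) := by
      field_simp; ring
    rw [e]
    have a4 : |(-κ) * ((O (x + h) - O (x - h)) / (2 * h))| ≤ 1 / 15 * (1 / 16) := by
      rw [abs_mul, abs_neg]; gcongr
      simpa using hO2 x
    have a5 := abs_le.1 a4
    have a6 := abs_le.1 (hP2 x)
    have a7 : 7 / 10 * (9 / 10) ≤ γ x := by
      simp only [hγ]
      have : 7 / 10 ≤ Real.cos (2 * Real.pi * (x - x0)) := by
        have h1 := Real.one_sub_sq_div_two_le_cos (x := 2 * Real.pi * (x - x0))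
        have h2 : Real.cos (Real.pi / 4) ≤ Real.cos (2 * Real.pi * (x - x0)) := by
          rw [← Real.cos_abs (2 * Real.pi * (x - x0))]
          apply Real.cos_le_cos_of_nonneg_of_le_pi (abs_nonneg _) (by linarith)
          rw [abs_mul, abs_of_pos (by positivity)]
          nlinarith
        rw [Real.cos_pi_div_four] at h2
        have : (1.4:ℝ) ≤ √2 := Real.le_sqrt_of_sq_le (by norm_num)
        linarith
      gcongr
    linarith

lemma slope_sum {W : ℝ → ℝ} {x0 h : ℝ} (hh : 0 < h) (h0 : W x0 = 0)
    (hs : ∀ x, |x - x0| ≤ 1 / 8 → 1 / 4 ≤ (W (x + h) - W (x - h)) / (2 * h)) (l : ℕ)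
    (hl : 2 * l * h ≤ 1 / 8) :
    2 * l * h / 4 ≤ W (x0 + 2 * l * h) ∧ W (x0 - 2 * l * h) ≤ - (2 * l * h / 4) := by
  induction l with
  | zero => simp [h0]
  | succ l ih =>
    push_cast at hl ⊢
    have hl0 : (0:ℝ) ≤ l := Nat.cast_nonneg l
    obtain ⟨i1, i2⟩ := ih (by linarith)
    have s1 := hs (x0 + (2 * l + 1) * h) (by
      rw [show x0 + (2 * l + 1) * h - x0 = (2 * l + 1) * h by ring, abs_of_pos (by positivity)]
      linarith)
    have s2 := hs (x0 - (2 * l + 1) * h) (by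
      rw [show x0 - (2 * l + 1) * h - x0 = -((2 * l + 1) * h) by ring, abs_neg,
        abs_of_pos (by positivity)]
      linarith)
    rw [le_div_iff₀ (by positivity)] at s1 s2
    rw [show x0 + (2 * l + 1) * h + h = x0 + 2 * (l + 1) * h by ring,
      show x0 + (2 * l + 1) * h - h = x0 + 2 * l * h by ring] at s1
    rw [show x0 - (2 * l + 1) * h + h = x0 - 2 * l * h by ring,
      show x0 - (2 * l + 1) * h - h = x0 - 2 * (l + 1) * h by ring] at s2
    constructor <;> linarith

/-- A solution of a linear parabolic equation on the circle. -/
structure LinSol (v vx vxx vt b c : ℝ → ℝ → ℝ) : Prop where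
  per : ∀ t, Function.Periodic (v t) 1
  perx : ∀ t, Function.Periodic (vx t) 1
  perxx : ∀ t, Function.Periodic (vxx t) 1
  pert : ∀ t, Function.Periodic (vt t) 1
  perb : ∀ t, Function.Periodic (b t) 1
  perc : ∀ t, Function.Periodic (c t) 1
  cont : Continuous fun p : ℝ × ℝ => v p.1 p.2
  contx : Continuous fun p : ℝ × ℝ => vx p.1 p.2
  contxx : Continuous fun p : ℝ × ℝ => vxx p.1 p.2
  contt : Continuous fun p : ℝ × ℝ => vt p.1 p.2
  dx : ∀ t x, HasDerivAt (v t) (vx t x) x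
  dxx : ∀ t x, HasDerivAt (vx t) (vxx t x) x
  dt : ∀ t x, HasDerivAt (fun s => v s x) (vt t x) t
  cb : ∀ s T, ∃ K, 0 ≤ K ∧ ∀ t ∈ Icc s T, CB K (b t) (c t)
  eq : ∀ t x, vt t x = vxx t x + b t x * vx t x + c t x * v t x

lemma unif2 {F : ℝ → ℝ → ℝ} (hF : ∀ t, Function.Periodic (F t) 1)
    (hc : Continuous fun p : ℝ × ℝ => F p.1 p.2) (s T : ℝ) {η : ℝ} (hη : 0 < η) :
    ∃ ρ > 0, ∀ t ∈ Icc s T, ∀ t' ∈ Icc s T, ∀ x x', |t - t'| ≤ ρ → |x - x'| ≤ ρ →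
      |F t x - F t' x'| ≤ η := by
  have hu := ((isCompact_Icc (a := s) (b := T)).prod
    (isCompact_Icc (a := (-1:ℝ)) (b := 2))).uniformContinuousOn_of_continuous hc.continuousOn
  rw [Metric.uniformContinuousOn_iff] at hu
  obtain ⟨d, hd, h⟩ := hu η hη
  refine ⟨min (d / 2) 1, by positivity, fun t ht t' ht' x x' htt hxx => ?_⟩
  have a1 := htt.trans (min_le_left _ _)
  have a2 := hxx.trans (min_le_left _ _)
  have a3 := abs_le.1 (hxx.trans (min_le_right _ _))
  have e1 : F t (x - ⌊x⌋) = F t x := by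
    have := per_int (hF t) (x - ⌊x⌋) ⌊x⌋
    rw [← this]; congr 1; ring
  have e2 : F t' (x' - ⌊x⌋) = F t' x' := by
    have := per_int (hF t') (x' - ⌊x⌋) ⌊x⌋
    rw [← this]; congr 1; ring
  have f1 := Int.floor_le x
  have f2 := Int.lt_floor_add_one x
  have := h (t, x - ⌊x⌋) ⟨ht, by constructor <;> simp only <;> linarith⟩ (t', x' - ⌊x⌋)
    ⟨ht', by constructor <;> simp only <;> linarith⟩ (by
      rw [Prod.dist_eq, max_lt_iff, Real.dist_eq, Real.dist_eq]
      simp only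
      refine ⟨by linarith, ?_⟩
      rw [show x - ⌊x⌋ - (x' - ⌊x⌋) = x - x' by ring]; linarith)
  rw [Real.dist_eq] at this
  simp only [e1, e2] at this
  exact this.le

lemma mvt_abs {g g' : ℝ → ℝ} (hd : ∀ x, HasDerivAt g (g' x) x) {a C : ℝ} {r : ℝ}
    (h : ∀ y, |y - a| ≤ r → |g' y| ≤ C) {y : ℝ} (hy : |y - a| ≤ r) :
    |g y - g a| ≤ C * |y - a| := by
  have := (convex_closedBall a r).norm_image_sub_le_of_norm_hasDerivWithin_le
    (f := g) (f' := g') (C := C) (x := a) (y := y)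
    (fun x _ => (hd x).hasDerivWithinAt) (fun x hx => by
      rw [Real.norm_eq_abs]; exact h x (by simpa [Real.dist_eq] using hx))
    (by simpa using (abs_nonneg _).trans hy) (by simpa [Real.dist_eq] using hy)
  simpa [Real.norm_eq_abs] using this

lemma taylor1 {g g' : ℝ → ℝ} (hd : ∀ x, HasDerivAt g (g' x) x) {a η r : ℝ}
    (h : ∀ y, |y - a| ≤ r → |g' y - g' a| ≤ η) {y : ℝ} (hy : |y - a| ≤ r) :
    |g y - g a - (y - a) * g' a| ≤ η * |y - a| := by
  have := mvt_abs (g := fun y => g y - y * g' a) (g' := fun y => g' y - 1 * g' a)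
    (fun x => (hd x).sub ((hasDerivAt_id x).mul_const _)) (a := a) (r := r) (C := η)
    (fun y hy => by simpa using h y hy) hy
  convert this using 2
  ring

lemma taylor2 {g g' g'' : ℝ → ℝ} (hd : ∀ x, HasDerivAt g (g' x) x)
    (hd' : ∀ x, HasDerivAt g' (g'' x) x) {a η r : ℝ}
    (h : ∀ y, |y - a| ≤ r → |g'' y - g'' a| ≤ η) {y : ℝ} (hy : |y - a| ≤ r) :
    |g y - g a - (y - a) * g' a - (y - a) ^ 2 / 2 * g'' a| ≤ η * r * |y - a| := by
  have hη : 0 ≤ η := by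
    have := h a (by simpa using (abs_nonneg _).trans hy)
    simpa using this
  have := mvt_abs (g := fun y => g y - (y - a) * g' a - (y - a) ^ 2 / 2 * g'' a)
    (g' := fun y => g' y - g' a - (y - a) * g'' a)
    (fun x => by
      have h1 : HasDerivAt (fun y => (y - a)) 1 x := (hasDerivAt_id x).sub_const a
      have := ((hd x).sub (h1.mul_const (g' a))).sub (((h1.pow 2).div_const 2).mul_const (g'' a))
      refine this.congr_deriv ?_
      push_cast; ring) (a := a) (r := r) (C := η * r)
    (fun y hy => (taylor1 hd' h hy).trans (by gcongr)) hy
  convert this using 2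
  ring

lemma trunc {v vx vxx vt b c : ℝ → ℝ → ℝ} (L : LinSol v vx vxx vt b c) (s T : ℝ) {η : ℝ}
    (hη : 0 < η) : ∃ ρ > 0, ∀ h, 0 < h → h ≤ ρ → ∀ t, s ≤ t → t + h ^ 2 / 2 ≤ T → ∀ x,
      |v (t + h ^ 2 / 2) x - St h (b t) (c t) (v t) x| ≤ η * (h ^ 2 / 2) := by
  obtain ⟨K, hK0, hK⟩ := L.cb s T
  set η' := η / (3 + 2 * K) with hη'
  have hη0 : 0 < η' := by positivity
  obtain ⟨r1, hr1, H1⟩ := unif2 L.per L.cont s T hη0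
  obtain ⟨r2, hr2, H2⟩ := unif2 L.perx L.contx s T hη0
  obtain ⟨r3, hr3, H3⟩ := unif2 L.perxx L.contxx s T hη0
  obtain ⟨r4, hr4, H4⟩ := unif2 L.pert L.contt s T hη0
  refine ⟨min (min (min r1 r2) (min r3 r4)) 1, by positivity, fun h hh hle t hst htT x => ?_⟩
  simp only [le_min_iff] at hle
  obtain ⟨⟨⟨l1, l2⟩, l3, l4⟩, l5⟩ := hle
  have hτ0 : 0 < h ^ 2 / 2 := by positivity
  have hτh : h ^ 2 / 2 ≤ h := by nlinarith
  set τ := h ^ 2 / 2 with hτ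
  have ht : t ∈ Icc s T := ⟨hst, by linarith⟩
  have hxp : |x + h - x| = h := by rw [add_sub_cancel_left, abs_of_pos hh]
  have hxm : |x - h - x| = h := by rw [show x - h - x = -h by ring, abs_neg, abs_of_pos hh]
  -- time derivative
  have A1 : |v (t + τ) x - v t x - τ * vt t x| ≤ η' * τ := by
    have e : v (t + τ) x - v t x - τ * vt t x
      = (v (t + τ) x - (t + τ) * vt t x) - (v t x - t * vt t x) := by ring
    rw [e]
    have := (convex_Icc t (t + τ)).norm_image_sub_le_of_norm_hasDerivWithin_le
      (f := fun r => v r x - r * vt t x) (f' := fun r => vt r x - 1 * vt t x) (C := η')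
      (x := t) (y := t + τ)
      (fun r _ => ((L.dt r x).sub ((hasDerivAt_id r).mul_const _)).hasDerivWithinAt)
      (fun r hr => by
        rw [Real.norm_eq_abs, one_mul]
        refine H4 r ⟨by linarith [hr.1], by linarith [hr.2]⟩ t ht x x ?_ (by simpa using hr4.le)
        rw [abs_of_nonneg (by linarith [hr.1])]; linarith [hr.2])
      (left_mem_Icc.2 (by linarith)) (right_mem_Icc.2 (by linarith))
    simpa [Real.norm_eq_abs, abs_of_pos hτ0] using this
  have B1 : ∀ y, |y - x| ≤ h → |vxx t y - vxx t x| ≤ η' := fun y hy =>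
    H3 t ht t ht y x (by simpa using hr3.le) (by linarith)
  have A2 := taylor2 (L.dx t) (L.dxx t) B1 (y := x + h) hxp.le
  have A3 := taylor2 (L.dx t) (L.dxx t) B1 (y := x - h) hxm.le
  have B2 : ∀ y, |y - x| ≤ h → |vx t y - vx t x| ≤ η' := fun y hy =>
    H2 t ht t ht y x (by simpa using hr2.le) (by linarith)
  have A4 := taylor1 (L.dx t) B2 (y := x + h) hxp.le
  have A5 := taylor1 (L.dx t) B2 (y := x - h) hxm.le
  have A6 := H1 t ht t ht (x + h) x (by simpa using hr1.le) (by linarith)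
  have A7 := H1 t ht t ht (x - h) x (by simpa using hr1.le) (by linarith)
  rw [hxp] at A2 A4
  rw [hxm] at A3 A5
  simp only [add_sub_cancel_left, show x - h - x = -h by ring] at A2 A3 A4 A5
  have C1 : |(v t (x + h) + v t (x - h)) / 2 - v t x - τ * vxx t x| ≤ 2 * η' * τ := by
    rw [abs_le] at A2 A3 ⊢
    have : τ * vxx t x = h ^ 2 / 2 * vxx t x := by rw [hτ]
    have : η' * h * h = 2 * η' * τ := by rw [hτ]; ring
    constructor <;> nlinarith
  have C2 : |(v t (x + h) + v t (x - h)) / 2 - v t x| ≤ η' := by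
    rw [abs_le] at A6 A7 ⊢
    constructor <;> linarith
  have C3 : |(v t (x + h) - v t (x - h)) / (2 * h) - vx t x| ≤ η' := by
    have e : (v t (x + h) - v t (x - h)) / (2 * h) - vx t x
      = (v t (x + h) - v t (x - h) - 2 * h * vx t x) / (2 * h) := by field_simp
    rw [e, abs_div, abs_of_pos (by positivity : 0 < 2 * h), div_le_iff₀ (by positivity)]
    rw [abs_le] at A4 A5 ⊢
    constructor <;> linarith
  obtain ⟨k1, k2, -, -⟩ := hK t ht x x
  have e : v (t + τ) x - St h (b t) (c t) (v t) x = (v (t + τ) x - v t x - τ * vt t x)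
    - ((v t (x + h) + v t (x - h)) / 2 - v t x - τ * vxx t x)
    - τ * (c t x * ((v t (x + h) + v t (x - h)) / 2 - v t x)
      + b t x * ((v t (x + h) - v t (x - h)) / (2 * h) - vx t x)) := by
    rw [L.eq]; simp only [St, ← hτ]; ring
  have C4 : |c t x * ((v t (x + h) + v t (x - h)) / 2 - v t x)
      + b t x * ((v t (x + h) - v t (x - h)) / (2 * h) - vx t x)| ≤ K * η' + K * η' := by
    refine (abs_add_le _ _).trans ?_
    rw [abs_mul, abs_mul]; gcongr
  rw [e]
  refine (abs_sub _ _).trans ?_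
  refine (add_le_add (abs_sub _ _) le_rfl).trans ?_
  rw [abs_mul, abs_of_pos hτ0]
  have C5 := mul_le_mul_of_nonneg_left C4 hτ0.le
  have e2 : η * τ = (3 + 2 * K) * η' * τ := by rw [hη']; field_simp
  rw [e2]
  linarith

lemma cons {v vx vxx vt b c : ℝ → ℝ → ℝ} (L : LinSol v vx vxx vt b c) {s t0 : ℝ} (hst : s ≤ t0)
    {η : ℝ} (hη : 0 < η) : ∃ ρ > 0, ∀ h, 0 < h → h ≤ ρ → ∀ n : ℕ,
      t0 ≤ s + n * (h ^ 2 / 2) → s + n * (h ^ 2 / 2) ≤ t0 + h ^ 2 / 2 → ∀ x,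
      |Dn h (fun l => b (s + l * (h ^ 2 / 2))) (fun l => c (s + l * (h ^ 2 / 2))) (v s) n x
        - v t0 x| ≤ η := by
  obtain ⟨K, hK0, hK⟩ := L.cb s (t0 + 1)
  set T := t0 + 1 - s with hT
  have hT1 : 1 ≤ T := by linarith
  set η' := η / (2 * (T * Real.exp (K * T))) with hη'
  have hη0 : 0 < η' := by positivity
  obtain ⟨r1, hr1, H1⟩ := trunc L s (t0 + 1) hη0
  obtain ⟨r2, hr2, H2⟩ := unif2 L.per L.cont s (t0 + 1) (half_pos hη)
  refine ⟨min (min r1 r2) (min (1 / 2) (1 / (2 * (K + 1)))), by positivity,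
    fun h hh hle n hn1 hn2 x => ?_⟩
  simp only [le_min_iff] at hle
  obtain ⟨⟨l1, l2⟩, l3, l4⟩ := hle
  have hhK : h * K ≤ 1 / 2 := by
    rw [le_div_iff₀ (by positivity)] at l4
    nlinarith
  have hτ0 : 0 < h ^ 2 / 2 := by positivity
  have hτh : h ^ 2 / 2 ≤ h := by nlinarith
  set τ := h ^ 2 / 2 with hτ
  have hT2 : s + n * τ ≤ t0 + 1 := by linarith
  have key : ∀ l ≤ n, ∀ x, |Dn h (fun l => b (s + l * τ)) (fun l => c (s + l * τ)) (v s) l x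
      - v (s + l * τ) x| ≤ η' * τ * l * (1 + K * τ) ^ l := by
    intro l
    induction l with
    | zero => intro _ x; simp [Dn]
    | succ l ih =>
      intro hl x
      have ih := ih (by omega)
      have hl' : (l + 1 : ℝ) ≤ n := by exact_mod_cast hl
      have hlT : s + l * τ + τ ≤ t0 + 1 := by nlinarith
      have hls : s ≤ s + l * τ := by
        have : 0 ≤ l * τ := by positivity
        linarith
      have g := gron (a := K * τ) (β := η' * τ) (by positivity) (by positivity) l
      refine le_trans ?_ g
      have t1 := H1 h hh l1 (s + l * τ) hls hlT x
      have t2 := st_bound hh l3 hhK (hK (s + l * τ) ⟨hls, by linarith⟩) ih x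
      have e0 : s + ((l + 1 : ℕ) : ℝ) * τ = s + l * τ + τ := by push_cast; ring
      rw [e0]
      set D := Dn h (fun l => b (s + l * τ)) (fun l => c (s + l * τ)) (v s) with hD
      have e1 : D (l + 1) x - v (s + l * τ + τ) x
        = St h (b (s + l * τ)) (c (s + l * τ)) (fun x => D l x - v (s + l * τ) x) x
          - (v (s + l * τ + τ) x - St h (b (s + l * τ)) (c (s + l * τ)) (v (s + l * τ)) x) := by
        have : D (l + 1) x = St h (b (s + l * τ)) (c (s + l * τ)) (D l) x := rfl
        rw [this]; simp only [St]; ring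
      rw [e1]
      exact (abs_sub _ _).trans (add_le_add t2 t1)
  have k1 := key n le_rfl x
  have k2 := gron_exp (a := K * τ) (β := η' * τ) (T := K * T) (by positivity) (by positivity) n (by
    have : n * τ ≤ T := by linarith
    nlinarith)
  have k3 : η' * τ * n * Real.exp (K * T) ≤ η / 2 := by
    have : n * τ ≤ T := by linarith
    calc η' * τ * n * Real.exp (K * T) = η' * (n * τ) * Real.exp (K * T) := by ring
      _ ≤ η' * T * Real.exp (K * T) := by gcongr
      _ = η / 2 := by rw [hη']; field_simp
  have k4 := H2 (s + n * τ) ⟨by linarith, hT2⟩ t0 ⟨hst, by linarith⟩ x x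
    (by rw [abs_of_nonneg (by linarith)]; linarith) (by simpa using hr2.le)
  calc _ = |(Dn h (fun l => b (s + l * τ)) (fun l => c (s + l * τ)) (v s) n x
      - v (s + n * τ) x) + (v (s + n * τ) x - v t0 x)| := by rw [sub_add_sub_cancel]
    _ ≤ _ := (abs_add_le _ _).trans (by linarith)

lemma dn_alt {h K y : ℝ} {b c : ℕ → ℝ → ℝ} {F : ℝ → ℝ} {N k : ℕ} (hN : 2 * N * h = 1)
    (hh : 0 < h) (hh1 : h ≤ 1 / 2) (hK : h * K ≤ 1 / 2) (n : ℕ)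
    (hb : ∀ n, Function.Periodic (b n) 1) (hc : ∀ n, Function.Periodic (c n) 1)
    (hF : Function.Periodic F 1) (hCB : ∀ l < n, CB K (b l) (c l))
    (x a : ℤ → ℝ) (h1 : ∀ i, x i < x (i + 1)) (h2 : ∀ i, x (i + k) = x i + 1)
    (ha : ∀ i, a i * a (i + 1) < 0)
    (h3 : ∀ (i l : ℤ), x i - 2 * h < y + (2 * l + n) * h → y + (2 * l + n) * h ≤ x i →
      0 < Dn h b c F n (y + (2 * l + n) * h) * a i) :
    Alt F k := by
  have := disc_alt (Z := Dn h b c F) (y := y)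
    (p := fun l x => (1 + h ^ 2 / 2 * c l x) / 2 + h * b l x / 4)
    (q := fun l x => (1 + h ^ 2 / 2 * c l x) / 2 - h * b l x / 4) hN n
    (dn_per hb hc hF) (fun l _ x => st_weights (b l) (c l) (Dn h b c F l) x)
    (fun l hl x => (weights_pos hh hh1 hK (hCB l hl x x).1 (hCB l hl x x).2.1).1)
    (fun l hl x => (weights_pos hh hh1 hK (hCB l hl x x).1 (hCB l hl x x).2.1).2)
    x a h1 h2 ha h3
  exact this

lemma mesh {ρ : ℝ} (hρ : 0 < ρ) : ∃ (N : ℕ) (h : ℝ), 0 < h ∧ h ≤ ρ ∧ 2 * N * h = 1 := by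
  obtain ⟨n, hn⟩ := exists_nat_gt (1 / ρ)
  have hn0 : (0:ℝ) < n := lt_trans (by positivity) hn
  refine ⟨n, 1 / (2 * n), by positivity, ?_, by field_simp⟩
  rw [div_lt_iff₀ hρ] at hn
  rw [div_le_iff₀ (by positivity)]
  linarith

lemma steps {s t0 τ : ℝ} (hs : s ≤ t0) (hτ : 0 < τ) :
    ∃ n : ℕ, t0 ≤ s + n * τ ∧ s + n * τ ≤ t0 + τ := by
  refine ⟨⌈(t0 - s) / τ⌉₊, ?_, ?_⟩
  · have := Nat.le_ceil ((t0 - s) / τ)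
    rw [div_le_iff₀ hτ] at this; linarith
  · have := Nat.ceil_lt_add_one (div_nonneg (sub_nonneg.2 hs) hτ.le)
    have h2 : (⌈(t0 - s) / τ⌉₊ : ℝ) - 1 < (t0 - s) / τ := by linarith
    rw [lt_div_iff₀ hτ] at h2; linarith

lemma small_h {h K : ℝ} (hh : 0 < h) (hK0 : 0 ≤ K) (h1 : h ≤ 1 / (2 * (K + 1))) :
    h * K ≤ 1 / 2 := by
  rw [le_div_iff₀ (by positivity)] at h1
  nlinarith

lemma prop_back {v vx vxx vt b c : ℝ → ℝ → ℝ} (L : LinSol v vx vxx vt b c) {s t0 : ℝ}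
    (hst : s ≤ t0) {k : ℕ} (hA : Alt (v t0) k) : Alt (v s) k := by
  have hk := alt_pos hA
  obtain ⟨x, h1, h2, h3⟩ := hA
  obtain ⟨μ, hμ, hmin⟩ := alt_min (L.per t0) hk h2 h3
  obtain ⟨K, hK0, hK⟩ := L.cb s (t0 + 1)
  have hct : Continuous (v t0) := by
    have := L.cont.comp (continuous_const (y := t0) |>.prodMk continuous_id)
    exact this
  obtain ⟨r1, hr1, H1⟩ := per_unif (L.per t0) hct (by positivity : 0 < μ / 4)
  obtain ⟨r2, hr2, H2⟩ := cons L hst (by positivity : 0 < μ / 4)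
  obtain ⟨N, h, hh, hle, hN⟩ := mesh (ρ := min (min (r1 / 2) r2) (min (1 / 2) (1 / (2 * (K + 1)))))
    (by positivity)
  simp only [le_min_iff] at hle
  obtain ⟨⟨l1, l2⟩, l3, l4⟩ := hle
  have hτ0 : 0 < h ^ 2 / 2 := by positivity
  have hτh : h ^ 2 / 2 ≤ h := by nlinarith
  obtain ⟨n, n1, n2⟩ := steps hst hτ0
  have H := H2 h hh l2 n n1 n2
  refine dn_alt (y := 0) (b := fun l => b (s + l * (h ^ 2 / 2)))
    (c := fun l => c (s + l * (h ^ 2 / 2))) hN hh l3 (small_h hh hK0 l4) n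
    (fun l => L.perb _) (fun l => L.perc _) (L.per s) (fun l hl => hK _ ?_) x
    (fun i => v t0 (x i)) h1 h2 h3 (fun i l e1 e2 => ?_)
  · have : (l + 1 : ℝ) ≤ n := by exact_mod_cast hl
    have : 0 ≤ (l:ℝ) * (h ^ 2 / 2) := by positivity
    constructor
    · linarith
    · nlinarith
  · set P := 0 + (2 * (l:ℝ) + n) * h with hP
    have a1 := abs_le.1 (H P)
    have a2 := abs_le.1 (H1 P (x i) (by rw [abs_le]; constructor <;> linarith))
    refine same_sign (hmin i) ?_
    rw [abs_lt]; constructor <;> linarith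

lemma alt_mk2 {k : ℕ} (hk : 0 < k) (p A : ℕ → ℝ)
    (h1 : ∀ r < k, p r < p (r + 1)) (h2 : p k = p 0 + 1) (hA : A k = A 0)
    (h3 : ∀ r < k, A r * A (r + 1) < 0) : ∃ x a : ℤ → ℝ, (∀ i, x i < x (i + 1)) ∧
      (∀ i, x (i + k) = x i + 1) ∧ (∀ i, a i * a (i + 1) < 0) ∧
      ∀ i, ∃ r < k, ∃ q : ℤ, x i = p r + q ∧ a i = A r := by
  have hk' : (0:ℤ) < k := by exact_mod_cast hk
  set x : ℤ → ℝ := fun i => p (i % k).toNat + ((i / k : ℤ) : ℝ) with hx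
  set a : ℤ → ℝ := fun i => A (i % k).toNat with ha
  have key : ∀ i : ℤ, ∃ r < k, ∃ q : ℤ, x i = p r + q ∧ x (i + 1) = p (r + 1) + q ∧
      a i = A r ∧ a (i + 1) = A (r + 1) := by
    intro i
    have hr0 := Int.emod_nonneg i hk'.ne'
    have hr1 := Int.emod_lt_of_pos i hk'
    have hdm := Int.emod_add_mul_ediv i k
    refine ⟨(i % k).toNat, by omega, i / k, rfl, ?_⟩
    by_cases hc : i % k + 1 = k
    · have e1 : (i + 1) % k = 0 := by
        rw [show i + 1 = 0 + k * (i / k + 1) by linarith]; simp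
      have e2 : (i + 1) / k = i / k + 1 := by
        rw [show i + 1 = 0 + k * (i / k + 1) by linarith, Int.add_mul_ediv_left _ _ hk'.ne']; simp
      have e3 : (i % k).toNat + 1 = k := by omega
      refine ⟨?_, rfl, ?_⟩
      · simp only [hx, e1, e2, e3, h2]; push_cast; ring_nf
      · simp only [ha, e1, e3, hA]; simp
    · have e0 : i + 1 = (i % k + 1) + k * (i / k) := by linarith
      have e1 : (i + 1) % k = i % k + 1 := by
        rw [e0, Int.add_mul_emod_self_left, Int.emod_eq_of_lt (by omega) (by omega)]
      have e2 : (i + 1) / k = i / k := by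
        rw [e0, Int.add_mul_ediv_left _ _ hk'.ne', Int.ediv_eq_zero_of_lt (by omega) (by omega)]
        simp
      have e3 : (i % k + 1).toNat = (i % k).toNat + 1 := by omega
      refine ⟨?_, rfl, ?_⟩
      · simp only [hx, e1, e2, e3]
      · simp only [ha, e1, e3]
  refine ⟨x, a, fun i => ?_, fun i => ?_, fun i => ?_, fun i => ?_⟩
  · obtain ⟨r, hr, q, e1, e2, -, -⟩ := key i
    rw [e1, e2]; have := h1 r hr; linarith
  · simp only [hx]
    rw [Int.add_emod_right, Int.add_ediv_of_dvd_right (dvd_refl _), Int.ediv_self hk'.ne']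
    push_cast; ring
  · obtain ⟨r, hr, q, -, -, e1, e2⟩ := key i
    rw [e1, e2]; exact h3 r hr
  · obtain ⟨r, hr, q, e1, e2, e3, e4⟩ := key i
    exact ⟨r, hr, q, e1, e3⟩

lemma insert_pts {g : ℝ → ℝ} (hg : Function.Periodic g 1) {m : ℕ} (hm : m = 0 ∨ Alt g m)
    {x0 : ℝ} (h0 : g x0 = 0) : ∃ σ μ r : ℝ, σ * σ = 1 ∧ 0 < μ ∧ 0 < r ∧ ∀ ℓ, 0 < ℓ → ℓ ≤ r →
    ∃ x a : ℤ → ℝ, (∀ i, x i < x (i + 1)) ∧ (∀ i, x (i + (m + 2 : ℕ)) = x i + 1) ∧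
      (∀ i, a i * a (i + 1) < 0) ∧ ∀ i, (μ ≤ |g (x i)| ∧ a i = g (x i)) ∨
        (∃ q : ℤ, x i = x0 - ℓ + q ∧ a i = -σ) ∨ (∃ q : ℤ, x i = x0 + ℓ + q ∧ a i = σ) := by
  rcases Nat.eq_zero_or_pos m with rfl | hm0
  · refine ⟨1, 1, 1 / 8, by norm_num, by norm_num, by norm_num, fun ℓ hℓ hle => ?_⟩
    obtain ⟨x, a, e1, e2, e3, e4⟩ := alt_mk2 (k := 0 + 2) (by norm_num)
      (fun r => if r = 0 then x0 - ℓ else if r = 1 then x0 + ℓ else x0 - ℓ + 1)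
      (fun r => if r = 1 then 1 else -1)
      (by
        intro r hr
        interval_cases r
        · norm_num; linarith
        · norm_num; linarith)
      (by norm_num) (by norm_num) (by intro r hr; interval_cases r <;> norm_num)
    refine ⟨x, a, e1, e2, e3, fun i => ?_⟩
    obtain ⟨r, hr, q, f1, f2⟩ := e4 i
    interval_cases r
    · right; left; exact ⟨q, by simpa using f1, by simpa using f2⟩
    · right; right; exact ⟨q, by simpa using f1, by simpa using f2⟩
  have hA : Alt g m := hm.resolve_left (by omega)
  obtain ⟨x, h1, h2, h3⟩ := hA
  obtain ⟨μ, hμ, hmin⟩ := alt_min hg hm0 h2 h3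
  have hmono : StrictMono x := strictMono_int_of_lt_succ h1
  have hsh := shift_int h2
  -- locate x0
  obtain ⟨i0, hi0, hmax⟩ : ∃ i0, x i0 ≤ x0 ∧ ∀ z, x z ≤ x0 → z ≤ i0 := by
    apply Int.exists_greatest_of_bdd
    · obtain ⟨n, hn⟩ := exists_int_gt (x0 - x 0)
      refine ⟨0 + m * n, fun z hz => ?_⟩
      by_contra hc; push Not at hc
      have := hmono hc
      rw [hsh n 0] at this
      linarith
    · obtain ⟨n, hn⟩ := exists_int_lt (x0 - x 0)
      refine ⟨0 + m * n, ?_⟩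
      rw [hsh n 0]; linarith
  have hgi : ∀ i, g (x i) ≠ 0 := fun i e => by have := hmin i; rw [e, abs_zero] at this; linarith
  have hlt : x i0 < x0 := lt_of_le_of_ne hi0 (fun e => hgi i0 (e ▸ h0))
  have hgt : x0 < x (i0 + 1) := by
    by_contra hc; push Not at hc
    have := hmax _ hc; omega
  set σ : ℝ := if g (x i0) < 0 then -1 else 1 with hσ
  have hσ1 : σ * σ = 1 ∧ 0 < σ * g (x i0) := by
    rcases lt_or_gt_of_ne (hgi i0) with h | h
    · have : σ = -1 := by rw [hσ, if_pos h]
      rw [this]; constructor <;> linarith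
    · have : σ = 1 := by rw [hσ, if_neg (not_lt.2 h.le)]
      rw [this]; constructor <;> linarith
  refine ⟨σ, μ, min ((x0 - x i0) / 2) ((x (i0 + 1) - x0) / 2), hσ1.1, hμ, ?_, fun ℓ hℓ hle => ?_⟩
  · apply lt_min <;> linarith
  have hl1 := hle.trans (min_le_left _ _)
  have hl2 := hle.trans (min_le_right _ _)
  have hσ0 : σ ≠ 0 := fun e => by simp [e] at hσ1
  have h4 : σ * g (x (i0 + 1)) < 0 := by
    have := h3 i0
    have h5 : (σ * g (x (i0 + 1))) * (g (x i0) * g (x i0)) < 0 := by nlinarith [hσ1.2]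
    have : 0 < g (x i0) * g (x i0) := mul_self_pos.2 (hgi i0)
    by_contra hc; push Not at hc
    have := mul_nonneg hc this.le
    linarith
  have e1 : ∀ r : ℕ, 2 ≤ r → ¬ (r = 0) ∧ ¬ (r = 1) := fun r hr => by omega
  obtain ⟨X, a, X1, X2, X3, X4⟩ := alt_mk2 (k := m + 2) (by omega)
      (fun r => if r = 0 then x0 - ℓ else if r = 1 then x0 + ℓ else
        if r = m + 2 then x0 - ℓ + 1 else x (i0 + r - 1))
      (fun r => if r = 0 then -σ else if r = 1 then σ else
        if r = m + 2 then -σ else g (x (i0 + r - 1)))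
      (by
        intro r hr
        rcases Nat.lt_or_ge r 2 with hr2 | hr2
        · interval_cases r
          · simp; linarith
          · have : ¬ (2 = m + 2) := by omega
            simp only [one_ne_zero, if_false, if_true, Nat.reduceAdd, this, OfNat.ofNat_ne_zero,
              OfNat.ofNat_ne_one]
            push_cast
            rw [show i0 + 2 - 1 = i0 + 1 by ring]; linarith
        · obtain ⟨a1, a2⟩ := e1 r hr2
          obtain ⟨a3, a4⟩ := e1 (r + 1) (by omega)
          have a5 : ¬ (r = m + 2) := by omega
          simp only [a1, a2, a3, a4, a5, if_false]
          split_ifs with hc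
          · rw [show i0 + (r:ℤ) - 1 = i0 + m by omega, h2]; linarith
          · apply hmono; push_cast; omega)
      (by simp) (by simp)
      (by
        intro r hr
        rcases Nat.lt_or_ge r 2 with hr2 | hr2
        · interval_cases r
          · simp; nlinarith
          · have : ¬ (2 = m + 2) := by omega
            simp only [one_ne_zero, if_false, if_true, Nat.reduceAdd, this, OfNat.ofNat_ne_zero,
              OfNat.ofNat_ne_one]
            push_cast
            rw [show i0 + 2 - 1 = i0 + 1 by ring]; linarith
        · obtain ⟨a1, a2⟩ := e1 r hr2
          obtain ⟨a3, a4⟩ := e1 (r + 1) (by omega)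
          have a5 : ¬ (r = m + 2) := by omega
          simp only [a1, a2, a3, a4, a5, if_false]
          split_ifs with hc
          · rw [show i0 + (r:ℤ) - 1 = i0 + m by omega, h2, hg]; linarith
          · have := h3 (i0 + r - 1)
            push_cast
            rwa [show i0 + (r:ℤ) - 1 + 1 = i0 + (r + 1) - 1 by ring] at this)
  refine ⟨X, a, X1, X2, X3, fun i => ?_⟩
  obtain ⟨r, hr, q, f1, f2⟩ := X4 i
  rcases Nat.lt_or_ge r 2 with hr2 | hr2
  · interval_cases r
    · right; left; exact ⟨q, by simpa using f1, by simpa using f2⟩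
    · right; right; exact ⟨q, by simpa using f1, by simpa using f2⟩
  · left
    obtain ⟨a1, a2⟩ := e1 r hr2
    have a5 : ¬ (r = m + 2) := by omega
    simp only [a1, a2, a5, if_false] at f1 f2
    rw [f1, f2, per_int hg]
    exact ⟨hmin _, rfl⟩

lemma lin_zero {g : ℝ → ℝ} {x0 : ℝ} (hd : HasDerivAt g 0 x0) (h0 : g x0 = 0) {η : ℝ}
    (hη : 0 < η) : ∃ r > 0, ∀ x, |x - x0| ≤ r → |g x| ≤ η * |x - x0| := by
  have := (hasDerivAt_iff_isLittleO.1 hd).def hη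
  rw [Metric.eventually_nhds_iff] at this
  obtain ⟨r, hr, H⟩ := this
  refine ⟨r / 2, by positivity, fun x hx => ?_⟩
  have := H (y := x) (by rw [Real.dist_eq]; linarith)
  simpa [h0] using this

set_option maxHeartbeats 1000000 in
lemma drop {v vx vxx vt b c : ℝ → ℝ → ℝ} (L : LinSol v vx vxx vt b c) {t0 x0 : ℝ} {m : ℕ}
    (hgood : ∀ t < t0, ∀ x, ¬ (v t x = 0 ∧ vx t x = 0)) (h0 : v t0 x0 = 0) (h0' : vx t0 x0 = 0)
    (hm : m = 0 ∨ Alt (v t0) m) : ∃ s < t0, Alt (v s) (m + 2) := by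
  obtain ⟨K, hK0, hK⟩ := L.cb (t0 - 1) (t0 + 1)
  obtain ⟨δ, hδ, hδ1, h₀, hh₀, HT⟩ := tilt hK0
  set s := t0 - δ / 2 with hs
  have hst : s ≤ t0 := by linarith
  refine ⟨s, by linarith, ?_⟩
  have hcs : Continuous (vx s) := by
    have := L.contx.comp (continuous_const (y := s) |>.prodMk continuous_id)
    exact this
  obtain ⟨ε0, hε0, HS⟩ := stab (L.per s) (L.perx s) (L.dx s) hcs (hgood s (by linarith))
  obtain ⟨σ, μ, r, hσ, hμ, hr, HI⟩ := insert_pts (L.per t0) hm h0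
  set ε := min (ε0 / 2) (μ / 8) with hε
  have hεp : 0 < ε := by positivity
  have hε1 : ε ≤ ε0 / 2 := min_le_left _ _
  have hε2 : ε ≤ μ / 8 := min_le_right _ _
  obtain ⟨r2, hr2, H2⟩ := lin_zero (h0' ▸ L.dx t0 x0) h0 (by positivity : 0 < ε / 64)
  set ℓ := min (min r (r2 / 2)) (1 / 16) with hℓ
  have hℓ0 : 0 < ℓ := by positivity
  have hℓ1 : ℓ ≤ r := (min_le_left _ _).trans (min_le_left _ _)
  have hℓ2 : ℓ ≤ r2 / 2 := (min_le_left _ _).trans (min_le_right _ _)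
  have hℓ3 : ℓ ≤ 1 / 16 := min_le_right _ _
  obtain ⟨X, a, X1, X2, X3, X4⟩ := HI ℓ hℓ0 hℓ1
  have hct : Continuous (v t0) := by
    have := L.cont.comp (continuous_const (y := t0) |>.prodMk continuous_id)
    exact this
  obtain ⟨r3, hr3, H3⟩ := per_unif (L.per t0) hct (by positivity : 0 < μ / 4)
  obtain ⟨r4, hr4, H4⟩ := cons L hst (by positivity : 0 < min (μ / 4) (ε * ℓ / 64))
  obtain ⟨N, h, hh, hle, hN⟩ := mesh (ρ := min (min (min (r3 / 2) r4) (min (1 / 2)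
    (1 / (2 * (K + 1))))) (min (min (ℓ / 4) h₀) (δ / 2))) (by positivity)
  simp only [le_min_iff] at hle
  obtain ⟨⟨⟨l1, l2⟩, l3, l4⟩, ⟨l5, l6⟩, l7⟩ := hle
  have hτ0 : 0 < h ^ 2 / 2 := by positivity
  have hτh : h ^ 2 / 2 ≤ h := by nlinarith
  obtain ⟨n, n1, n2⟩ := steps hst hτ0
  have H := H4 h hh l2 n n1 n2
  set τ := h ^ 2 / 2 with hτ
  have hCB : ∀ l < n, CB K (b (s + l * τ)) (c (s + l * τ)) := fun l hl => by
    apply hK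
    have : (l + 1 : ℝ) ≤ n := by exact_mod_cast hl
    have : 0 ≤ (l:ℝ) * τ := by positivity
    constructor
    · linarith
    · nlinarith
  set bb : ℕ → ℝ → ℝ := fun l => b (s + l * τ) with hbb
  set cc : ℕ → ℝ → ℝ := fun l => c (s + l * τ) with hcc
  obtain ⟨κ, hκ, W, hW, W0, Wb, Ws⟩ := HT h hh l6 x0 n bb cc (by rw [← hτ]; linarith) hCB
  set Ψ : ℝ → ℝ := fun x => Real.sin (2 * Real.pi * (x - x0)) / (2 * Real.pi) + (-κ) * 1 with hΨ
  have hpi := Real.pi_gt_three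
  have hΨp : Function.Periodic Ψ 1 := fun x => by
    simp only [hΨ]
    rw [show 2 * Real.pi * (x + 1 - x0) = 2 * Real.pi * (x - x0) + 2 * Real.pi by ring,
      Real.sin_add_two_pi]
  have hWp : Function.Periodic W 1 := by
    rw [hW]; exact dn_per (fun l => L.perb _) (fun l => L.perc _) hΨp n
  have hΨb : ∀ x, |Ψ x| ≤ 2 := fun x => by
    simp only [hΨ]
    have a1 : |Real.sin (2 * Real.pi * (x - x0)) / (2 * Real.pi)| ≤ 1 := by
      rw [abs_div, abs_of_pos (by positivity : 0 < 2 * Real.pi), div_le_one (by positivity)]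
      exact (Real.abs_sin_le_one _).trans (by linarith)
    refine (abs_add_le _ _).trans ?_
    rw [mul_one, abs_neg]; linarith
  have hΨd : ∀ x, HasDerivAt Ψ (Real.cos (2 * Real.pi * (x - x0))) x := fun x => by
    have e1 : HasDerivAt (fun x => 2 * Real.pi * (x - x0)) (2 * Real.pi * 1) x :=
      ((hasDerivAt_id x).sub_const x0).const_mul _
    have e2 := (e1.sin.div_const (2 * Real.pi)).add_const (-κ * 1)
    refine e2.congr_deriv ?_
    field_simp
  have hσa : |σ| = 1 := by
    have : |σ| * |σ| = 1 := by rw [← abs_mul, hσ, abs_one]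
    nlinarith [abs_nonneg σ]
  have hεσ : |ε * σ| = ε := by rw [abs_mul, hσa, mul_one, abs_of_pos hεp]
  have hZ : ∀ x, Dn h bb cc (fun x => v s x + (ε * σ) * Ψ x) n x
      = Dn h bb cc (v s) n x + (ε * σ) * W x := fun x => by rw [dn_lin, hW]
  refine HS (fun x => v s x + (ε * σ) * Ψ x)
    (fun x => vx s x + (ε * σ) * Real.cos (2 * Real.pi * (x - x0)))
    (fun x => by simp only [L.per s x, hΨp x]) (fun x => (L.dx s x).add ((hΨd x).const_mul _))
    (fun x => ?_) (fun x => ?_) (m + 2) ?_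
  · rw [add_sub_cancel_left, abs_mul, hεσ]
    have := hΨb x
    nlinarith
  · rw [add_sub_cancel_left, abs_mul, hεσ]
    have := Real.abs_cos_le_one (2 * Real.pi * (x - x0))
    nlinarith
  refine dn_alt (y := x0 - n * h) (b := bb) (c := cc) hN hh l3 (small_h hh hK0 l4) n
    (fun l => L.perb _) (fun l => L.perc _) (fun x => by simp only [L.per s x, hΨp x]) hCB
    X a X1 X2 X3 (fun i l e1 e2 => ?_)
  rw [show x0 - n * h + (2 * (l:ℝ) + n) * h = x0 + 2 * l * h by ring] at e1 e2 ⊢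
  rw [hZ]
  set P := x0 + 2 * (l:ℝ) * h with hP
  have HP := H P
  have HP1 := abs_le.1 (HP.trans (min_le_left _ _))
  have HP2 := abs_le.1 (HP.trans (min_le_right _ _))
  -- the shifted lattice point
  have hsh : ∀ q : ℤ, P - q = x0 + 2 * ((l - N * q : ℤ) : ℝ) * h := fun q => by
    rw [hP]; push_cast; linear_combination (q:ℝ) * hN
  have hgp : ∀ q : ℤ, v t0 (P - q) = v t0 P := fun q => by
    rw [← per_int (L.per t0) (P - q) q]; congr 1; ring
  have hwp : ∀ q : ℤ, W (P - q) = W P := fun q => by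
    rw [← per_int hWp (P - q) q]; congr 1; ring
  set Z := Dn h bb cc (v s) n P with hZd
  have fin : ∀ w : ℝ, ∀ ρ : ℝ, |ρ| = 1 → |w| ≤ ε * ℓ / 32 → |Z - w| ≤ ε * ℓ / 64 →
      ∀ y, ℓ / 8 ≤ y * ρ → ∀ u, u = ε * y → 0 < (Z + u) * ρ := by
    intro w ρ hρ hw hZw y hy u hu
    have k1 : |Z * ρ| ≤ 3 * (ε * ℓ / 64) := by
      rw [abs_mul, hρ, mul_one]
      calc |Z| = |(Z - w) + w| := by ring_nf
        _ ≤ _ := (abs_add_le _ _).trans (by linarith)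
    have k2 := (abs_le.1 k1).1
    have k3 : u * ρ = ε * (y * ρ) := by rw [hu]; ring
    have k4 : ε * (ℓ / 8) ≤ ε * (y * ρ) := by gcongr
    have k5 : 0 < ε * ℓ := by positivity
    rw [add_mul]; linarith
  rcases X4 i with ⟨b1, b2⟩ | ⟨q, b1, b2⟩ | ⟨q, b1, b2⟩
  · rw [b2]
    have a2 := abs_le.1 (H3 P (X i) (by rw [abs_le]; constructor <;> linarith))
    refine same_sign b1 ?_
    have a3 : |(ε * σ) * W P| ≤ ε * 2 := by
      rw [abs_mul, hεσ]; have := Wb P; gcongr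
    have a3 := abs_le.1 a3
    rw [abs_lt]; constructor <;> linarith
  · rw [b2]
    have hq := hsh q
    set k : ℤ := l - N * q with hk
    rw [b1] at e1 e2
    have c1 : 2 * (k:ℝ) * h ≤ -ℓ := by linarith
    have c2 : -ℓ - 2 * h < 2 * (k:ℝ) * h := by linarith
    have hk0 : k ≤ 0 := by
      by_contra hc; push Not at hc
      have : (0:ℝ) < k := by exact_mod_cast hc
      have : 0 < 2 * (k:ℝ) * h := by positivity
      linarith
    obtain ⟨j, hj⟩ := Int.exists_eq_neg_ofNat hk0
    have hjr : (k:ℝ) = -(j:ℝ) := by rw [hj]; push_cast; rfl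
    rw [hjr] at c1 c2 hq
    have sl := (slope_sum hh W0 Ws j (by linarith)).2
    rw [show x0 - 2 * (j:ℝ) * h = P - q by rw [hq]; ring, hwp] at sl
    have g1 := H2 (P - q) (by rw [hq, abs_le]; constructor <;> linarith)
    have g2 : |P - q - x0| ≤ 2 * ℓ := by rw [hq, abs_le]; constructor <;> linarith
    rw [hgp] at g1
    refine fin (v t0 P) (-σ) (by rw [abs_neg, hσa]) (g1.trans ?_) (HP.trans (min_le_right _ _))
      (σ * W P) ?_ _ (by ring)
    · nlinarith
    · have : σ * W P * -σ = - (W P) := by linear_combination (-(W P)) * hσ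
      rw [this]; linarith
  · rw [b2]
    have hq := hsh q
    set k : ℤ := l - N * q with hk
    rw [b1] at e1 e2
    have c1 : 2 * (k:ℝ) * h ≤ ℓ := by linarith
    have c2 : ℓ - 2 * h < 2 * (k:ℝ) * h := by linarith
    have hk0 : 0 ≤ k := by
      by_contra hc; push Not at hc
      have : (k:ℝ) < 0 := by exact_mod_cast hc
      nlinarith
    obtain ⟨j, hj⟩ := Int.eq_ofNat_of_zero_le hk0
    have hjr : (k:ℝ) = (j:ℝ) := by rw [hj]; push_cast; rfl
    rw [hjr] at c1 c2 hq
    have sl := (slope_sum hh W0 Ws j (by linarith)).1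
    rw [show x0 + 2 * (j:ℝ) * h = P - q by rw [hq], hwp] at sl
    have g1 := H2 (P - q) (by rw [hq, abs_le]; constructor <;> linarith)
    have g2 : |P - q - x0| ≤ 2 * ℓ := by rw [hq, abs_le]; constructor <;> linarith
    rw [hgp] at g1
    refine fin (v t0 P) σ hσa (g1.trans ?_) (HP.trans (min_le_right _ _))
      (σ * W P) ?_ _ (by ring)
    · nlinarith
    · have : σ * W P * σ = W P := by linear_combination (W P) * hσ
      rw [this]; linarith

lemma no_multiple {v vx vxx vt b c : ℝ → ℝ → ℝ} (L : LinSol v vx vxx vt b c) {m : ℕ}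
    (hearly : ∃ T, ∀ t ≤ T, (∀ x, ¬ (v t x = 0 ∧ vx t x = 0)) ∧ ¬ Alt (v t) (m + 2))
    (hlate : m = 0 ∨ ∃ T, ∀ t ≥ T, Alt (v t) m) (t x : ℝ) : ¬ (v t x = 0 ∧ vx t x = 0) := by
  rintro ⟨h1, h2⟩
  obtain ⟨T, hT⟩ := hearly
  have hTt : T < t := by
    by_contra hc; push Not at hc; exact (hT t hc).1 x ⟨h1, h2⟩
  set S : Set (ℝ × ℝ) := (Icc T t ×ˢ Icc (0:ℝ) 1) ∩ {p | v p.1 p.2 = 0 ∧ vx p.1 p.2 = 0} with hS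
  have hSc : IsCompact S := by
    refine (isCompact_Icc.prod isCompact_Icc).inter_right ?_
    exact (isClosed_eq L.cont continuous_const).inter (isClosed_eq L.contx continuous_const)
  have hmem : ∀ t' x', T ≤ t' → t' ≤ t → v t' x' = 0 → vx t' x' = 0 →
      t' ∈ Prod.fst '' S := fun t' x' a1 a2 a3 a4 =>
    ⟨(t', Int.fract x'), ⟨⟨⟨a1, a2⟩, Int.fract_nonneg _, (Int.fract_lt_one _).le⟩,
      by rw [← zero_floor (L.per t')] at a3; exact a3,
      by rw [← zero_floor (L.perx t')] at a4; exact a4⟩, rfl⟩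
  obtain ⟨t0, ⟨⟨t0', x0⟩, ⟨⟨q1, q2⟩, q3, q4⟩, rfl⟩, hleast⟩ :=
    (hSc.image continuous_fst).exists_isLeast ⟨t, hmem t x hTt.le le_rfl h1 h2⟩
  simp only at q1 q2 q3 q4 hleast
  obtain ⟨s, hs, hA⟩ := drop (m := m) L (t0 := t0') (x0 := x0) (fun t' ht' x' hx' => by
    rcases le_or_gt t' T with h | h
    · exact (hT t' h).1 x' hx'
    · have := hleast (hmem t' x' h.le (by linarith [q1.2]) hx'.1 hx'.2)
      linarith) q3 q4 (by
    rcases hlate with h | ⟨T', hT'⟩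
    · exact Or.inl h
    · exact Or.inr (prop_back L (le_max_left t0' T') (hT' _ (le_max_right _ _))))
  exact (hT (min s T) (min_le_right _ _)).2 (prop_back L (min_le_left _ _) hA)

lemma per_deriv {g : ℝ → ℝ} (hg : Function.Periodic g 1) : Function.Periodic (deriv g) 1 := by
  intro x
  rw [← deriv_comp_add_const]
  congr 1
  funext y
  exact hg y

lemma per_bdd {E : Type*} [NormedAddCommGroup E] {G : ℝ × ℝ × ℝ → E} (hc : Continuous G)
    (hp : ∀ x w p, G (x + 1, w, p) = G (x, w, p)) (M : ℝ) :
    ∃ C, 0 ≤ C ∧ ∀ x w p, |w| ≤ M → |p| ≤ M → ‖G (x, w, p)‖ ≤ C := by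
  obtain ⟨C, hC⟩ := ((isCompact_Icc (a := (0:ℝ)) (b := 1)).prod
    ((isCompact_Icc (a := -M) (b := M)).prod
      (isCompact_Icc (a := -M) (b := M)))).exists_bound_of_continuousOn hc.continuousOn
  refine ⟨max C 0, le_max_right _ _, fun x w p hw hpp => ?_⟩
  have e : G (x, w, p) = G (Int.fract x, w, p) := by
    have h1 : Function.Periodic (fun x => G (x, w, p)) 1 := fun x => hp x w p
    have := h1.int_mul ⌊x⌋ (Int.fract x)
    simp only [mul_one] at this
    rw [← this, Int.fract_add_floor]
  rw [e]
  exact (hC _ ⟨⟨Int.fract_nonneg _, (Int.fract_lt_one _).le⟩, abs_le.1 hw, abs_le.1 hpp⟩).trans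
    (le_max_left _ _)

lemma per_fderiv {E : Type*} [NormedAddCommGroup E] [NormedSpace ℝ E] {G : ℝ × ℝ × ℝ → E}
    (hp : ∀ x w p, G (x + 1, w, p) = G (x, w, p)) (x w p : ℝ) :
    fderiv ℝ G (x + 1, w, p) = fderiv ℝ G (x, w, p) := by
  have h := fderiv_comp_add_right (𝕜 := ℝ) (f := G) (x := (x, w, p)) ((1:ℝ), (0:ℝ), (0:ℝ))
  have e : (fun q : ℝ × ℝ × ℝ => G (q + (1, 0, 0))) = G := by
    funext ⟨a, b, c⟩
    simpa using hp a b c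
  rw [e] at h
  rw [h]; simp

lemma c1_bdd {D : ℝ × ℝ × ℝ → ℝ} (hD : ContDiff ℝ 1 D)
    (hp : ∀ x w p, D (x + 1, w, p) = D (x, w, p)) (M : ℝ) :
    ∃ C, 0 ≤ C ∧ ∀ x w p x' w' p', |w| ≤ M → |p| ≤ M → |w'| ≤ M → |p'| ≤ M →
      |D (x, w, p)| ≤ C ∧
      |D (x, w, p) - D (x', w', p')| ≤ C * ‖((x, w, p) : ℝ × ℝ × ℝ) - (x', w', p')‖ := by
  obtain ⟨C1, hC1, H1⟩ := per_bdd hD.continuous hp M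
  obtain ⟨C2, hC2, H2⟩ := per_bdd (hD.continuous_fderiv one_ne_zero) (per_fderiv hp) M
  refine ⟨C1 + C2, by positivity, fun x w p x' w' p' a1 a2 a3 a4 => ⟨?_, ?_⟩⟩
  · have := H1 x w p a1 a2
    rw [Real.norm_eq_abs] at this; linarith
  · have hconv : Convex ℝ ((univ : Set ℝ) ×ˢ (Icc (-M) M ×ˢ Icc (-M) M)) :=
      convex_univ.prod ((convex_Icc _ _).prod (convex_Icc _ _))
    have := hconv.norm_image_sub_le_of_norm_fderiv_le (𝕜 := ℝ) (f := D) (C := C2)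
      (x := (x', w', p')) (y := (x, w, p))
      (fun q _ => (hD.differentiable one_ne_zero) q)
      (fun q hq => H2 q.1 q.2.1 q.2.2 (abs_le.2 hq.2.1) (abs_le.2 hq.2.2))
      ⟨mem_univ _, abs_le.1 a3, abs_le.1 a4⟩ ⟨mem_univ _, abs_le.1 a1, abs_le.1 a2⟩
    rw [Real.norm_eq_abs] at this
    refine this.trans ?_
    gcongr
    linarith

/-- Averaged coefficient. -/
noncomputable def co (D : ℝ × ℝ × ℝ → ℝ) (w1 w2 p1 p2 : ℝ → ℝ) (x : ℝ) : ℝ :=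
  ∫ θ in (0:ℝ)..1, D (x, w2 x + θ * (w1 x - w2 x), p2 x + θ * (p1 x - p2 x))

lemma conv_abs {a b M θ : ℝ} (ha : |a| ≤ M) (hb : |b| ≤ M) (h0 : 0 ≤ θ) (h1 : θ ≤ 1) :
    |b + θ * (a - b)| ≤ M := by
  rw [abs_le] at *
  constructor <;> nlinarith

lemma co_bound {D : ℝ × ℝ × ℝ → ℝ} (hD : Continuous D) {C M : ℝ} (hC : 0 ≤ C) (hM : 0 ≤ M)
    (H : ∀ x w p x' w' p', |w| ≤ M → |p| ≤ M → |w'| ≤ M → |p'| ≤ M →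
      |D (x, w, p)| ≤ C ∧
      |D (x, w, p) - D (x', w', p')| ≤ C * ‖((x, w, p) : ℝ × ℝ × ℝ) - (x', w', p')‖)
    {w1 w2 p1 p2 : ℝ → ℝ} (h1 : ∀ x, |w1 x| ≤ M) (h2 : ∀ x, |w2 x| ≤ M) (h3 : ∀ x, |p1 x| ≤ M)
    (h4 : ∀ x, |p2 x| ≤ M) (l1 : ∀ x y, |w1 x - w1 y| ≤ M * |x - y|)
    (l2 : ∀ x y, |w2 x - w2 y| ≤ M * |x - y|) (l3 : ∀ x y, |p1 x - p1 y| ≤ M * |x - y|)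
    (l4 : ∀ x y, |p2 x - p2 y| ≤ M * |x - y|) (x y : ℝ) :
    |co D w1 w2 p1 p2 x| ≤ C * (1 + M) ∧
      |co D w1 w2 p1 p2 x - co D w1 w2 p1 p2 y| ≤ C * (1 + M) * |x - y| := by
  have hI : ∀ x, IntervalIntegrable
      (fun θ => D (x, w2 x + θ * (w1 x - w2 x), p2 x + θ * (p1 x - p2 x)))
      MeasureTheory.volume 0 1 := fun x => Continuous.intervalIntegrable (by fun_prop) _ _
  constructor
  · have := intervalIntegral.norm_integral_le_of_norm_le_const (a := (0:ℝ)) (b := 1) (C := C)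
      (f := fun θ => D (x, w2 x + θ * (w1 x - w2 x), p2 x + θ * (p1 x - p2 x)))
      (fun θ hθ => by
        rw [uIoc_of_le zero_le_one] at hθ
        exact (H x _ _ 0 0 0 (conv_abs (h1 x) (h2 x) hθ.1.le hθ.2)
          (conv_abs (h3 x) (h4 x) hθ.1.le hθ.2) (by simpa using hM) (by simpa using hM)).1)
    simp only [sub_zero, abs_one, mul_one, Real.norm_eq_abs] at this
    unfold co
    nlinarith
  · unfold co
    rw [← intervalIntegral.integral_sub (hI x) (hI y)]
    have := intervalIntegral.norm_integral_le_of_norm_le_const (a := (0:ℝ)) (b := 1)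
      (C := C * (1 + M) * |x - y|)
      (f := fun θ => D (x, w2 x + θ * (w1 x - w2 x), p2 x + θ * (p1 x - p2 x)) -
        D (y, w2 y + θ * (w1 y - w2 y), p2 y + θ * (p1 y - p2 y)))
      (fun θ hθ => by
        rw [uIoc_of_le zero_le_one] at hθ
        refine (H x _ _ y _ _ (conv_abs (h1 x) (h2 x) hθ.1.le hθ.2)
          (conv_abs (h3 x) (h4 x) hθ.1.le hθ.2) (conv_abs (h1 y) (h2 y) hθ.1.le hθ.2)
          (conv_abs (h3 y) (h4 y) hθ.1.le hθ.2)).2.trans ?_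
        rw [mul_assoc]
        gcongr
        have hxy := abs_nonneg (x - y)
        have k1 := conv_abs (l1 x y) (l2 x y) hθ.1.le hθ.2
        have k2 := conv_abs (l3 x y) (l4 x y) hθ.1.le hθ.2
        simp only [Prod.mk_sub_mk, Prod.norm_def, Real.norm_eq_abs, sup_le_iff]
        refine ⟨by nlinarith, ?_, ?_⟩
        · rw [show w2 x + θ * (w1 x - w2 x) - (w2 y + θ * (w1 y - w2 y))
            = w2 x - w2 y + θ * (w1 x - w1 y - (w2 x - w2 y)) by ring]; linarith
        · rw [show p2 x + θ * (p1 x - p2 x) - (p2 y + θ * (p1 y - p2 y))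
            = p2 x - p2 y + θ * (p1 x - p1 y - (p2 x - p2 y)) by ring]; linarith)
    simpa [Real.norm_eq_abs] using this

lemma co_eq {F : ℝ × ℝ × ℝ → ℝ} (hF : ContDiff ℝ 2 F) (w1 w2 p1 p2 : ℝ → ℝ) (x : ℝ) :
    F (x, w1 x, p1 x) - F (x, w2 x, p2 x) =
      co (fun q => fderiv ℝ F q (0, 0, 1)) w1 w2 p1 p2 x * (p1 x - p2 x) +
      co (fun q => fderiv ℝ F q (0, 1, 0)) w1 w2 p1 p2 x * (w1 x - w2 x) := by
  have hcont : Continuous (fderiv ℝ F) := hF.continuous_fderiv (by norm_num)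
  have hd : ∀ θ ∈ uIcc (0:ℝ) 1, HasDerivAt
      (fun θ => F (x, w2 x + θ * (w1 x - w2 x), p2 x + θ * (p1 x - p2 x)))
      (fderiv ℝ F (x, w2 x + θ * (w1 x - w2 x), p2 x + θ * (p1 x - p2 x)) (0, 0, 1) * (p1 x - p2 x)
        + fderiv ℝ F (x, w2 x + θ * (w1 x - w2 x), p2 x + θ * (p1 x - p2 x)) (0, 1, 0)
          * (w1 x - w2 x)) θ := by
    intro θ _
    have a1 : HasDerivAt (fun θ : ℝ => ((x, w2 x + θ * (w1 x - w2 x), p2 x + θ * (p1 x - p2 x)) :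
        ℝ × ℝ × ℝ)) (0, 1 * (w1 x - w2 x), 1 * (p1 x - p2 x)) θ :=
      (hasDerivAt_const θ x).prodMk ((((hasDerivAt_id θ).mul_const _).const_add _).prodMk
        (((hasDerivAt_id θ).mul_const _).const_add _))
    have a2 := (hF.differentiable (by norm_num) _).hasFDerivAt.comp_hasDerivAt θ a1
    refine a2.congr_deriv ?_
    rw [show ((0:ℝ), 1 * (w1 x - w2 x), 1 * (p1 x - p2 x))
      = (p1 x - p2 x) • ((0:ℝ), (0:ℝ), (1:ℝ)) + (w1 x - w2 x) • ((0:ℝ), (1:ℝ), (0:ℝ)) by simp,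
      map_add, map_smul, map_smul, smul_eq_mul, smul_eq_mul]
    ring
  have hI : ∀ e, IntervalIntegrable
      (fun θ => fderiv ℝ F (x, w2 x + θ * (w1 x - w2 x), p2 x + θ * (p1 x - p2 x)) e)
      MeasureTheory.volume 0 1 := fun e => Continuous.intervalIntegrable (by fun_prop) _ _
  have := intervalIntegral.integral_eq_sub_of_hasDerivAt hd
    (((hI _).mul_const _).add ((hI _).mul_const _))
  rw [intervalIntegral.integral_add ((hI _).mul_const _) ((hI _).mul_const _),
    intervalIntegral.integral_mul_const, intervalIntegral.integral_mul_const] at this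
  unfold co
  rw [this]
  simp

lemma bdd2 {F : ℝ → ℝ → ℝ} (hF : ∀ t, Function.Periodic (F t) 1)
    (hc : Continuous fun p : ℝ × ℝ => F p.1 p.2) (s T : ℝ) :
    ∃ M, 0 ≤ M ∧ ∀ t ∈ Icc s T, ∀ x, |F t x| ≤ M := by
  obtain ⟨C, hC⟩ := ((isCompact_Icc (a := s) (b := T)).prod
    (isCompact_Icc (a := (0:ℝ)) (b := 1))).exists_bound_of_continuousOn hc.continuousOn
  refine ⟨max C 0, le_max_right _ _, fun t ht x => ?_⟩
  rw [← zero_floor (hF t) x]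
  exact (hC (t, Int.fract x) ⟨ht, Int.fract_nonneg _, (Int.fract_lt_one _).le⟩).trans
    (le_max_left _ _)

lemma lip_of {g g' : ℝ → ℝ} (hd : ∀ x, HasDerivAt g (g' x) x) {M : ℝ} (h : ∀ x, |g' x| ≤ M)
    (x y : ℝ) : |g x - g y| ≤ M * |x - y| :=
  mvt_abs hd (r := |x - y|) (fun y _ => h y) le_rfl

lemma linsol_of {f : ℝ → ℝ → ℝ → ℝ}
    (hf_reg : ContDiff ℝ 2 (fun q : ℝ × ℝ × ℝ => f q.1 q.2.1 q.2.2))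
    (hf_per : ∀ (x w q : ℝ), f (x + 1) w q = f x w q) {u1 u2 : ℝ → ℝ → ℝ}
    (h1 : IsClassicalSolution f u1) (h2 : IsClassicalSolution f u2) :
    ∃ vxx vt b c, LinSol (fun t x => u1 t x - u2 t x)
      (fun t x => deriv (u1 t) x - deriv (u2 t) x) vxx vt b c := by
  obtain ⟨a1, a2, a3, a4, a5, a6, a7, a8, a9⟩ := h1
  obtain ⟨b1, b2, b3, b4, b5, b6, b7, b8, b9⟩ := h2
  set F := (fun q : ℝ × ℝ × ℝ => f q.1 q.2.1 q.2.2) with hF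
  have hFp : ∀ x w p, F (x + 1, w, p) = F (x, w, p) := fun x w p => hf_per x w p
  have hDe : ∀ e, ContDiff ℝ 1 (fun q => fderiv ℝ F q e) := fun e =>
    (hf_reg.fderiv_right (m := 1) (by norm_num)).clm_apply contDiff_const
  have hDp : ∀ e x w p, fderiv ℝ F (x + 1, w, p) e = fderiv ℝ F (x, w, p) e := fun e x w p => by
    rw [per_fderiv hFp]
  have hper : ∀ e t, Function.Periodic (co (fun q => fderiv ℝ F q e) (u1 t) (u2 t)
      (deriv (u1 t)) (deriv (u2 t))) 1 := fun e t x => by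
    simp only [co, hDp e, a1 t x, b1 t x, per_deriv (a1 t) x, per_deriv (b1 t) x]
  refine ⟨fun t x => deriv (deriv (u1 t)) x - deriv (deriv (u2 t)) x,
    fun t x => deriv (fun s => u1 s x) t - deriv (fun s => u2 s x) t,
    fun t => co (fun q => fderiv ℝ F q (0, 0, 1)) (u1 t) (u2 t) (deriv (u1 t)) (deriv (u2 t)),
    fun t => co (fun q => fderiv ℝ F q (0, 1, 0)) (u1 t) (u2 t) (deriv (u1 t)) (deriv (u2 t)),
    ?_⟩
  refine { per := fun t => (a1 t).sub (b1 t)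
           perx := fun t => (per_deriv (a1 t)).sub (per_deriv (b1 t))
           perxx := fun t => (per_deriv (per_deriv (a1 t))).sub (per_deriv (per_deriv (b1 t)))
           pert := fun t x => ?_
           perb := hper _
           perc := hper _
           cont := a2.sub b2
           contx := a7.sub b7
           contxx := a8.sub b8
           contt := a6.sub b6
           dx := fun t x => (a4 t x).hasDerivAt.sub (b4 t x).hasDerivAt
           dxx := fun t x => (a5 t x).hasDerivAt.sub (b5 t x).hasDerivAt
           dt := fun t x => (a3 t x).hasDerivAt.sub (b3 t x).hasDerivAt
           cb := fun s T => ?_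
           eq := fun t x => ?_ }
  · simp only [fun s => a1 s x, fun s => b1 s x]
  · obtain ⟨m1, hm1, M1⟩ := bdd2 a1 a2 s T
    obtain ⟨m2, hm2, M2⟩ := bdd2 b1 b2 s T
    obtain ⟨m3, hm3, M3⟩ := bdd2 (fun t => per_deriv (a1 t)) a7 s T
    obtain ⟨m4, hm4, M4⟩ := bdd2 (fun t => per_deriv (b1 t)) b7 s T
    obtain ⟨m5, hm5, M5⟩ := bdd2 (fun t => per_deriv (per_deriv (a1 t))) a8 s T
    obtain ⟨m6, hm6, M6⟩ := bdd2 (fun t => per_deriv (per_deriv (b1 t))) b8 s T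
    set M := m1 + m2 + m3 + m4 + m5 + m6 with hM
    have hM0 : 0 ≤ M := by positivity
    obtain ⟨C1, hC1, H1⟩ := c1_bdd (hDe (0, 0, 1)) (hDp (0, 0, 1)) M
    obtain ⟨C2, hC2, H2⟩ := c1_bdd (hDe (0, 1, 0)) (hDp (0, 1, 0)) M
    refine ⟨C1 * (1 + M) + C2 * (1 + M), by positivity, fun t ht x y => ?_⟩
    have g1 : ∀ x, |u1 t x| ≤ M := fun x => (M1 t ht x).trans (by linarith)
    have g2 : ∀ x, |u2 t x| ≤ M := fun x => (M2 t ht x).trans (by linarith)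
    have g3 : ∀ x, |deriv (u1 t) x| ≤ M := fun x => (M3 t ht x).trans (by linarith)
    have g4 : ∀ x, |deriv (u2 t) x| ≤ M := fun x => (M4 t ht x).trans (by linarith)
    have g5 : ∀ x, |deriv (deriv (u1 t)) x| ≤ M := fun x => (M5 t ht x).trans (by linarith)
    have g6 : ∀ x, |deriv (deriv (u2 t)) x| ≤ M := fun x => (M6 t ht x).trans (by linarith)
    have l1 := lip_of (fun x => (a4 t x).hasDerivAt) g3
    have l2 := lip_of (fun x => (b4 t x).hasDerivAt) g4
    have l3 := lip_of (fun x => (a5 t x).hasDerivAt) g5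
    have l4 := lip_of (fun x => (b5 t x).hasDerivAt) g6
    obtain ⟨k1, k2⟩ := co_bound (hDe (0, 0, 1)).continuous hC1 hM0 H1 g1 g2 g3 g4 l1 l2 l3 l4 x y
    obtain ⟨k3, k4⟩ := co_bound (hDe (0, 1, 0)).continuous hC2 hM0 H2 g1 g2 g3 g4 l1 l2 l3 l4 x y
    have e1 : 0 ≤ C1 * (1 + M) := by positivity
    have e2 : 0 ≤ C2 * (1 + M) := by positivity
    have e3 := mul_nonneg e1 (abs_nonneg (x - y))
    have e4 := mul_nonneg e2 (abs_nonneg (x - y))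
    rw [add_mul]
    exact ⟨by linarith, by linarith, by linarith, by linarith⟩
  · have := co_eq hf_reg (u1 t) (u2 t) (deriv (u1 t)) (deriv (u2 t)) x
    rw [a9, b9]
    linarith

lemma eq_classical {f : ℝ → ℝ → ℝ → ℝ} {e : ℝ → ℝ} (he : IsEquilibrium f e) :
    IsClassicalSolution f (fun _ => e) := by
  obtain ⟨h1, h2, h3⟩ := he
  have d0 : Differentiable ℝ e := h2.differentiable (by norm_num)
  have h2' : ContDiff ℝ 1 (deriv e) := by
    have : ContDiff ℝ (1 + 1) e := by simpa [one_add_one_eq_two] using h2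
    exact (contDiff_succ_iff_deriv.1 this).2.2
  have d1 : Differentiable ℝ (deriv e) := h2'.differentiable (by norm_num)
  have c2 : Continuous (deriv (deriv e)) := h2'.continuous_deriv le_rfl
  refine ⟨fun _ => h1, h2.continuous.comp continuous_snd, fun t x => differentiableAt_const _,
    fun _ => d0, fun _ => d1, ?_, h2'.continuous.comp continuous_snd, c2.comp continuous_snd, ?_⟩
  · simp only [deriv_const]; exact continuous_const
  · intro t x
    simp only [deriv_const]; exact (h3 x).symm

lemma shift_classical {f : ℝ → ℝ → ℝ → ℝ} {u : ℝ → ℝ → ℝ} (hu : IsClassicalSolution f u)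
    (τ : ℝ) : IsClassicalSolution f (fun t => u (t + τ)) := by
  obtain ⟨a1, a2, a3, a4, a5, a6, a7, a8, a9⟩ := hu
  have hs : Continuous (fun p : ℝ × ℝ => (p.1 + τ, p.2)) := by fun_prop
  have hd : ∀ t x, deriv (fun s => u (s + τ) x) t = deriv (fun s => u s x) (t + τ) := fun t x =>
    deriv_comp_add_const (f := fun s => u s x) τ t
  refine ⟨fun t => a1 _, a2.comp hs, fun t x => ?_, fun t => a4 _, fun t => a5 _, ?_,
    a7.comp hs, a8.comp hs, fun t x => ?_⟩
  · exact (a3 (t + τ) x).comp t (differentiableAt_id.add_const τ)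
  · simp only [hd]; exact a6.comp hs
  · rw [hd]; exact a9 _ _

lemma simple_finite {g g' : ℝ → ℝ} (hd : ∀ x, HasDerivAt g (g' x) x)
    (hs : ∀ x, g x = 0 → g' x ≠ 0) : {x ∈ Ico (0:ℝ) 1 | g x = 0}.Finite := by
  by_contra hinf
  obtain ⟨x, -, hx⟩ := Set.Infinite.exists_accPt_of_subset_isCompact (K := Icc (0:ℝ) 1) hinf
    isCompact_Icc (fun y hy => Ico_subset_Icc_self hy.1)
  rw [accPt_iff_frequently_nhdsNE] at hx
  have hne : ∀ᶠ y in nhdsWithin x {x}ᶜ, g y ≠ 0 := by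
    by_cases h0 : g x = 0
    · exact (hd x).eventually_ne (hs x h0)
    · exact ((hd x).continuousAt.eventually_ne h0).filter_mono nhdsWithin_le_nhds
  obtain ⟨y, h1, h2⟩ := (hx.and_eventually hne).exists
  exact h2 h1.2

def Asym (l : Filter ℝ) (v vx : ℝ → ℝ → ℝ) (r : ℝ → ℝ) (g g' : ℝ → ℝ) : Prop :=
  ∀ ε > 0, ∀ᶠ t in l, ∀ x, |v t x - r t * g x| ≤ ε * |r t| ∧ |vx t x - r t * g' x| ≤ ε * |r t|

lemma abs_scale {r a b ε : ℝ} (hr : r ≠ 0) (h : |a - r * b| ≤ ε * |r|) : |r⁻¹ * a - b| ≤ ε := by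
  have : r⁻¹ * a - b = (a - r * b) / r := by field_simp
  rw [this, abs_div, div_le_iff₀ (abs_pos.2 hr)]
  exact h

lemma asym_good {l : Filter ℝ} {v vx : ℝ → ℝ → ℝ} {r : ℝ → ℝ} {g g' : ℝ → ℝ}
    (hA : Asym l v vx r g g') (hr : ∀ t, r t ≠ 0) (hv : ∀ t, Function.Periodic (v t) 1)
    (hvd : ∀ t x, HasDerivAt (v t) (vx t x) x)
    (hg : Function.Periodic g 1) (hg' : Function.Periodic g' 1)
    (hd : ∀ x, HasDerivAt g (g' x) x) (hc' : Continuous g')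
    (hs : ∀ x, ¬ (g x = 0 ∧ g' x = 0)) :
    ∀ᶠ t in l, (∀ x, ¬ (v t x = 0 ∧ vx t x = 0)) ∧ ∀ k, Alt (v t) k → Alt g k := by
  have hcg : Continuous g := continuous_iff_continuousAt.2 fun x => (hd x).continuousAt
  obtain ⟨ε, hε, HS⟩ := stab hg hg' hd hc' hs
  obtain ⟨η, hη, hlow⟩ := per_bound_below (F := fun x => |g x| + |g' x|)
    (fun x => by simp [hg x, hg' x]) (by fun_prop) (fun x => by
      have h1 := abs_nonneg (g x)
      have h2 := abs_nonneg (g' x)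
      by_contra hc; push Not at hc
      exact hs x ⟨abs_eq_zero.1 (by linarith), abs_eq_zero.1 (by linarith)⟩)
  filter_upwards [hA ε hε, hA (η / 3) (by positivity)] with t h1 h2
  refine ⟨fun x hx => ?_, fun k hk => ?_⟩
  · obtain ⟨p1, p2⟩ := h2 x
    have q1 := abs_scale (hr t) p1
    have q2 := abs_scale (hr t) p2
    rw [hx.1] at q1
    rw [hx.2] at q2
    simp only [mul_zero, zero_sub, abs_neg] at q1 q2
    have := hlow x
    linarith
  · exact HS (fun x => (r t)⁻¹ * v t x) (fun x => (r t)⁻¹ * vx t x)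
      (fun x => by simp only [hv t x]) (fun x => (hvd t x).const_mul _)
      (fun x => abs_scale (hr t) (h1 x).1) (fun x => abs_scale (hr t) (h1 x).2) k
      (alt_scale (inv_ne_zero (hr t)) hk)

lemma asym_alt {l : Filter ℝ} {v vx : ℝ → ℝ → ℝ} {r : ℝ → ℝ} {g g' : ℝ → ℝ}
    (hA : Asym l v vx r g g') (hr : ∀ t, r t ≠ 0)
    (hg : Function.Periodic g 1) {k : ℕ} (hk : Alt g k) : ∀ᶠ t in l, Alt (v t) k := by
  obtain ⟨ε, hε, H⟩ := alt_pert0 hg hk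
  filter_upwards [hA ε hε] with t h1
  have := alt_scale (hr t) (H (fun x => (r t)⁻¹ * v t x) (fun x => abs_scale (hr t) (h1 x).1))
  have e : (fun x => r t * ((r t)⁻¹ * v t x)) = v t := by
    funext x; rw [mul_inv_cancel_left₀ (hr t)]
  rwa [e] at this

lemma asym_zero {l : Filter ℝ} {v vx : ℝ → ℝ → ℝ} {r : ℝ → ℝ} {g g' : ℝ → ℝ}
    (hA : Asym l v vx r g g') (hr : Filter.Tendsto r l (nhds 0))
    (hg : Function.Periodic g 1) (hg' : Function.Periodic g' 1) (hc : Continuous g)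
    (hc' : Continuous g') {ε : ℝ} (hε : 0 < ε) :
    ∀ᶠ t in l, ∀ x, |v t x| ≤ ε ∧ |vx t x| ≤ ε := by
  obtain ⟨M1, hM1, H1⟩ := bdd2 (F := fun _ => g) (fun _ => hg) (hc.comp continuous_snd) 0 0
  obtain ⟨M2, hM2, H2⟩ := bdd2 (F := fun _ => g') (fun _ => hg') (hc'.comp continuous_snd) 0 0
  have hq : 0 < ε / (1 + M1 + M2) := by positivity
  have hr' : ∀ᶠ t in l, |r t| < ε / (1 + M1 + M2) := by
    have := hr.eventually (Metric.ball_mem_nhds 0 hq)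
    simpa [Real.dist_eq] using this
  filter_upwards [hA 1 one_pos, hr'] with t h1 h2 x
  rw [lt_div_iff₀ (by positivity)] at h2
  have h0 := abs_nonneg (r t)
  have b1 := H1 0 (by simp) x
  have b2 := H2 0 (by simp) x
  obtain ⟨p1, p2⟩ := h1 x
  have c1 : |r t * g x| ≤ |r t| * M1 := by rw [abs_mul]; gcongr
  have c2 : |r t * g' x| ≤ |r t| * M2 := by rw [abs_mul]; gcongr
  have d1 := mul_nonneg h0 hM1
  have d2 := mul_nonneg h0 hM2
  constructor
  · calc |v t x| = |(v t x - r t * g x) + r t * g x| := by ring_nf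
      _ ≤ _ := (abs_add_le _ _).trans (by nlinarith)
  · calc |vx t x| = |(vx t x - r t * g' x) + r t * g' x| := by ring_nf
      _ ≤ _ := (abs_add_le _ _).trans (by nlinarith)

lemma asym_shift {l : Filter ℝ} {v vx : ℝ → ℝ → ℝ} {lam τ : ℝ} {g g' : ℝ → ℝ}
    (hA : Asym l v vx (fun t => Real.exp (lam * t)) g g') (hl : lam ≠ 0) (hτ : τ ≠ 0)
    (ht : Filter.Tendsto (fun t => t + τ) l l) :
    Real.exp (lam * τ) - 1 ≠ 0 ∧
    Asym l (fun t x => v (t + τ) x - v t x) (fun t x => vx (t + τ) x - vx t x)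
      (fun t => Real.exp (lam * t) * (Real.exp (lam * τ) - 1)) g g' := by
  have hne : Real.exp (lam * τ) - 1 ≠ 0 := by
    rw [sub_ne_zero]
    intro h
    rw [Real.exp_eq_one_iff] at h
    exact mul_ne_zero hl hτ h
  refine ⟨hne, fun ε hε => ?_⟩
  set E := Real.exp (lam * τ) with hE
  have hE0 : 0 < E := Real.exp_pos _
  have hp : 0 < |E - 1| := abs_pos.2 hne
  set ε' := ε * |E - 1| / (E + 1) with hε'
  have hε0 : 0 < ε' := by positivity
  filter_upwards [hA ε' hε0, ht.eventually (hA ε' hε0)] with t h1 h2 x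
  have hexp : Real.exp (lam * (t + τ)) = Real.exp (lam * t) * E := by
    rw [hE, ← Real.exp_add]; ring_nf
  simp only [hexp] at h2
  have hx0 := Real.exp_pos (lam * t)
  set X := Real.exp (lam * t) with hX
  have hb : ε' * |X * E| + ε' * |X| = ε * |X * (E - 1)| := by
    rw [abs_mul, abs_mul, abs_of_pos hx0, abs_of_pos hE0, hε']
    field_simp
  rw [← hb]
  constructor
  · have e : v (t + τ) x - v t x - X * (E - 1) * g x
      = (v (t + τ) x - X * E * g x) - (v t x - X * g x) := by ring
    simp only [e]
    exact (abs_sub _ _).trans (add_le_add (h2 x).1 (h1 x).1)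
  · have e : vx (t + τ) x - vx t x - X * (E - 1) * g' x
      = (vx (t + τ) x - X * E * g' x) - (vx t x - X * g' x) := by ring
    simp only [e]
    exact (abs_sub _ _).trans (add_le_add (h2 x).2 (h1 x).2)

lemma eq_unique {f : ℝ → ℝ → ℝ → ℝ}
    (hf_reg : ContDiff ℝ 2 (fun q : ℝ × ℝ × ℝ => f q.1 q.2.1 q.2.2))
    (hf_per : ∀ (x w q : ℝ), f (x + 1) w q = f x w q) {e1 e2 : ℝ → ℝ}
    (h1 : IsEquilibrium f e1) (h2 : IsEquilibrium f e2) {x0 : ℝ} (hx : e1 x0 = e2 x0)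
    (hx' : deriv e1 x0 = deriv e2 x0) : e1 = e2 := by
  have k1 := eq_classical h1
  have k2 := eq_classical h2
  obtain ⟨a1, a2, a3, a4, a5, a6, a7, a8, a9⟩ := k1
  obtain ⟨b1, b2, b3, b4, b5, b6, b7, b8, b9⟩ := k2
  obtain ⟨m1, hm1, M1⟩ := bdd2 a1 a2 0 0
  obtain ⟨m2, hm2, M2⟩ := bdd2 b1 b2 0 0
  obtain ⟨m3, hm3, M3⟩ := bdd2 (fun t => per_deriv (a1 t)) a7 0 0
  obtain ⟨m4, hm4, M4⟩ := bdd2 (fun t => per_deriv (b1 t)) b7 0 0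
  set M := m1 + m2 + m3 + m4 with hM
  obtain ⟨C, hC, H⟩ := c1_bdd (hf_reg.of_le (by norm_num)) (fun x w p => hf_per x w p) M
  have h00 : (0:ℝ) ∈ Icc (0:ℝ) 0 := by simp
  have hd : ∀ e : ℝ → ℝ, IsEquilibrium f e → Differentiable ℝ e → Differentiable ℝ (deriv e) →
      ∀ t, HasDerivAt (fun x => (e x, deriv e x)) (deriv e t, - f t (e t) (deriv e t)) t := by
    intro e he c1 c2 t
    have := (c1 t).hasDerivAt.prodMk (c2 t).hasDerivAt
    refine this.congr_deriv ?_
    have := he.2.2 t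
    rw [Prod.mk.injEq]
    exact ⟨rfl, by linarith⟩
  have := ODE_solution_unique_univ (v := fun t (q : ℝ × ℝ) => (q.2, - f t q.1 q.2))
    (s := fun _ => Icc (-M) M ×ˢ Icc (-M) M) (K := Real.toNNReal (1 + C))
    (f := fun x => (e1 x, deriv e1 x)) (g := fun x => (e2 x, deriv e2 x)) (t₀ := x0)
    (fun t => by
      apply LipschitzOnWith.of_dist_le_mul
      rintro ⟨w, p⟩ ⟨q1, q2⟩ ⟨w', p'⟩ ⟨q3, q4⟩
      have := (H t w p t w' p' (abs_le.2 q1) (abs_le.2 q2) (abs_le.2 q3) (abs_le.2 q4)).2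
      simp only [Prod.mk_sub_mk, Prod.norm_def, Real.norm_eq_abs, sub_self, abs_zero] at this
      rw [max_eq_right (by positivity)] at this
      simp only [Prod.dist_eq, Real.dist_eq]
      rw [show - f t w p - - f t w' p' = -(f t w p - f t w' p') by ring, abs_neg]
      have i1 := le_max_right |w - w'| |p - p'|
      have i2 := (abs_nonneg _).trans i1
      have i3 := mul_nonneg hC i2
      rw [Real.coe_toNNReal _ (by positivity), add_mul, one_mul]
      exact max_le (by linarith) (by linarith))
    (fun t => ⟨hd e1 h1 (a4 0) (a5 0) t,
      abs_le.1 ((M1 0 h00 t).trans (by linarith)), abs_le.1 ((M3 0 h00 t).trans (by linarith))⟩)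
    (fun t => ⟨hd e2 h2 (b4 0) (b5 0) t,
      abs_le.1 ((M2 0 h00 t).trans (by linarith)), abs_le.1 ((M4 0 h00 t).trans (by linarith))⟩)
    (by simp only [hx, hx'])
  funext x
  have h := congrFun this x
  exact (Prod.mk.inj h).1

/-- **One-to-one property of homoindexed connecting orbits.**
Let `u` be a bounded classical solution of `u_t = u_xx + f(x,u,u_x)` connecting two
equilibria `em`, `ep`, with asymptotic expansions
`u(·,t) = em + e^{λ⁻t} φ⁻ + o(e^{λ⁻t})` in `C¹(S¹)` as `t → -∞` and
`u(·,t) = ep + e^{λ⁺t} φ⁺ + o(e^{λ⁺t})` in `C¹(S¹)` as `t → +∞`, where `λ⁻ > 0 > λ⁺`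
and `φ⁻`, `φ⁺` are `C¹` functions having exactly `m` zeros (`m` even), all simple.
Then `(u(x,t),u_x(x,t))` never equals `(em(x),em'(x))` or `(ep(x),ep'(x))`, and the map
`(x,t) ↦ (x, u(x,t), u_x(x,t))` is one-to-one on `S¹ × ℝ`. -/
theorem one_to_one_homoindexed_orbit
    (f : ℝ → ℝ → ℝ → ℝ)
    (hf_reg : ContDiff ℝ 2 (fun q : ℝ × ℝ × ℝ => f q.1 q.2.1 q.2.2))
    (hf_per : ∀ (x w q : ℝ), f (x + 1) w q = f x w q)
    (em ep : ℝ → ℝ) (hem : IsEquilibrium f em) (hep : IsEquilibrium f ep)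
    (m : ℕ) (hm : Even m)
    (u : ℝ → ℝ → ℝ) (hu : IsClassicalSolution f u)
    (hu_bdd : ∃ C, ∀ t x : ℝ, |u t x| ≤ C)
    (lamm lamp : ℝ) (hlamm : 0 < lamm) (hlamp : lamp < 0)
    (phim phip : ℝ → ℝ)
    (hphimreg : ContDiff ℝ 1 phim) (hphimper : Function.Periodic phim 1)
    (hphipreg : ContDiff ℝ 1 phip) (hphipper : Function.Periodic phip 1)
    (hphimzeros : HasExactlySimpleZeros phim m)
    (hphipzeros : HasExactlySimpleZeros phip m)
    -- ‖u(·,t) − em − e^{λ⁻ t} φ⁻‖_{C¹(S¹)} = o(e^{λ⁻ t}) as t → −∞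
    (hasym_minus : ∀ ε > (0:ℝ), ∃ T : ℝ, ∀ t ≤ T, ∀ x : ℝ,
      |u t x - em x - Real.exp (lamm * t) * phim x| ≤ ε * Real.exp (lamm * t)
      ∧ |deriv (u t) x - deriv em x - Real.exp (lamm * t) * deriv phim x|
          ≤ ε * Real.exp (lamm * t))
    -- ‖u(·,t) − ep − e^{λ⁺ t} φ⁺‖_{C¹(S¹)} = o(e^{λ⁺ t}) as t → +∞
    (hasym_plus : ∀ ε > (0:ℝ), ∃ T : ℝ, ∀ t ≥ T, ∀ x : ℝ,
      |u t x - ep x - Real.exp (lamp * t) * phip x| ≤ ε * Real.exp (lamp * t)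
      ∧ |deriv (u t) x - deriv ep x - Real.exp (lamp * t) * deriv phip x|
          ≤ ε * Real.exp (lamp * t)) :
    (∀ t x : ℝ, ¬ (u t x = em x ∧ deriv (u t) x = deriv em x))
    ∧ (∀ t x : ℝ, ¬ (u t x = ep x ∧ deriv (u t) x = deriv ep x))
    ∧ (∀ (x t₁ t₂ : ℝ), u t₁ x = u t₂ x → deriv (u t₁) x = deriv (u t₂) x → t₁ = t₂) := by
  obtain ⟨zs1, zc1⟩ := hphimzeros
  obtain ⟨zs2, zc2⟩ := hphipzeros
  have hd1 : ∀ x, HasDerivAt phim (deriv phim x) x := fun x =>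
    (hphimreg.differentiable (by norm_num) x).hasDerivAt
  have hd2 : ∀ x, HasDerivAt phip (deriv phip x) x := fun x =>
    (hphipreg.differentiable (by norm_num) x).hasDerivAt
  have hc1 : Continuous (deriv phim) := hphimreg.continuous_deriv le_rfl
  have hc2 : Continuous (deriv phip) := hphipreg.continuous_deriv le_rfl
  have hp1 := per_deriv hphimper
  have hp2 := per_deriv hphipper
  have nm : ¬ Alt phim (m + 2) := fun h => by
    have := alt_zeros hphimper hphimreg.continuous h (simple_finite hd1 zs1)
    omega
  have pm : m = 0 ∨ Alt phip m := by
    rcases Nat.eq_zero_or_pos m with h | h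
    · exact Or.inl h
    · exact Or.inr (zeros_alt hphipper hd2 zs2 h zc2)
  have ns1 : ∀ x, ¬ (phim x = 0 ∧ deriv phim x = 0) := fun x h => zs1 x h.1 h.2
  obtain ⟨v2, v3, v4, v5, L1⟩ := linsol_of hf_reg hf_per hu (eq_classical hem)
  obtain ⟨y2, y3, y4, y5, L2⟩ := linsol_of hf_reg hf_per hu (eq_classical hep)
  have A1 : Asym Filter.atBot (fun t x => u t x - em x) (fun t x => deriv (u t) x - deriv em x)
      (fun t => Real.exp (lamm * t)) phim (deriv phim) := fun ε hε => by
    obtain ⟨T, hT⟩ := hasym_minus ε hε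
    filter_upwards [Filter.eventually_le_atBot T] with t ht x
    rw [abs_of_pos (Real.exp_pos (lamm * t))]
    exact hT t ht x
  have A2 : Asym Filter.atTop (fun t x => u t x - ep x) (fun t x => deriv (u t) x - deriv ep x)
      (fun t => Real.exp (lamp * t)) phip (deriv phip) := fun ε hε => by
    obtain ⟨T, hT⟩ := hasym_plus ε hε
    filter_upwards [Filter.eventually_ge_atTop T] with t ht x
    rw [abs_of_pos (Real.exp_pos (lamp * t))]
    exact hT t ht x
  have E1 : ∃ T, ∀ t ≤ T, (∀ x, ¬ (u t x - em x = 0 ∧ deriv (u t) x - deriv em x = 0)) ∧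
      ¬ Alt (fun x => u t x - em x) (m + 2) := by
    obtain ⟨T, hT⟩ := Filter.eventually_atBot.1 (asym_good A1 (fun t => (Real.exp_pos _).ne')
      L1.per L1.dx hphimper hp1 hd1 hc1 ns1)
    exact ⟨T, fun t ht => ⟨(hT t ht).1, fun h => nm ((hT t ht).2 _ h)⟩⟩
  have E2 : m = 0 ∨ ∃ T, ∀ t ≥ T, Alt (fun x => u t x - ep x) m := by
    refine pm.imp id fun h => ?_
    exact Filter.eventually_atTop.1 (asym_alt A2 (fun t => (Real.exp_pos _).ne') hphipper h)
  have main : (∀ t x, ¬ (u t x - em x = 0 ∧ deriv (u t) x - deriv em x = 0)) ∧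
      (∀ t x, ¬ (u t x - ep x = 0 ∧ deriv (u t) x - deriv ep x = 0)) := by
    by_cases hee : em = ep
    · subst hee
      exact ⟨no_multiple L1 E1 E2, no_multiple L1 E1 E2⟩
    have emd : ∀ x, HasDerivAt em (deriv em x) x := fun x =>
      (hem.2.1.differentiable (by norm_num) x).hasDerivAt
    have epd : ∀ x, HasDerivAt ep (deriv ep x) x := fun x =>
      (hep.2.1.differentiable (by norm_num) x).hasDerivAt
    have emc : Continuous (deriv em) := hem.2.1.continuous_deriv (by norm_num)
    have epc : Continuous (deriv ep) := hep.2.1.continuous_deriv (by norm_num)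
    have Dper : Function.Periodic (fun x => em x - ep x) 1 := hem.1.sub hep.1
    have Dper' : Function.Periodic (fun x => deriv em x - deriv ep x) 1 :=
      (per_deriv hem.1).sub (per_deriv hep.1)
    have Nper : Function.Periodic (fun x => -(em x - ep x)) 1 := fun x => by
      have := Dper x
      simp only at this ⊢
      rw [this]
    have r1 : Filter.Tendsto (fun t => Real.exp (lamm * t)) Filter.atBot (nhds 0) :=
      Real.tendsto_exp_atBot.comp (Filter.tendsto_id.const_mul_atBot hlamm)
    have r2 : Filter.Tendsto (fun t => Real.exp (lamp * t)) Filter.atTop (nhds 0) :=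
      Real.tendsto_exp_atBot.comp (Filter.tendsto_id.const_mul_atTop_of_neg hlamp)
    have A3 : Asym Filter.atBot (fun t x => u t x - ep x)
        (fun t x => deriv (u t) x - deriv ep x) (fun _ => 1) (fun x => em x - ep x)
        (fun x => deriv em x - deriv ep x) := fun ε hε => by
      filter_upwards [asym_zero A1 r1 hphimper hp1 hphimreg.continuous hc1 hε] with t ht x
      have := ht x
      rw [abs_one, mul_one, one_mul, one_mul,
        show u t x - ep x - (em x - ep x) = u t x - em x by ring,
        show deriv (u t) x - deriv ep x - (deriv em x - deriv ep x)
          = deriv (u t) x - deriv em x by ring]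
      exact this
    have A4 : Asym Filter.atTop (fun t x => u t x - em x)
        (fun t x => deriv (u t) x - deriv em x) (fun _ => 1) (fun x => -(em x - ep x))
        (fun x => -(deriv em x - deriv ep x)) := fun ε hε => by
      filter_upwards [asym_zero A2 r2 hphipper hp2 hphipreg.continuous hc2 hε] with t ht x
      have := ht x
      rw [abs_one, mul_one, one_mul, one_mul,
        show u t x - em x - -(em x - ep x) = u t x - ep x by ring,
        show deriv (u t) x - deriv em x - -(deriv em x - deriv ep x)
          = deriv (u t) x - deriv ep x by ring]
      exact this
    have E3 := asym_good A3 (fun _ => one_ne_zero) L2.per L2.dx Dper Dper'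
      (fun x => (emd x).sub (epd x)) (emc.sub epc) (fun x hx => hee
        (eq_unique hf_reg hf_per hem hep (sub_eq_zero.1 hx.1) (sub_eq_zero.1 hx.2)))
    obtain ⟨T3, hT3⟩ := Filter.eventually_atBot.1 E3
    have late : ∀ k, Alt (fun x => em x - ep x) k → ∃ T, ∀ t ≥ T,
        Alt (fun x => u t x - em x) k := fun k hk =>
      Filter.eventually_atTop.1 (asym_alt A4 (fun _ => one_ne_zero) Nper (alt_neg hk))
    constructor
    · refine no_multiple L1 E1 (E2.imp id ?_)
      rintro ⟨T, hT⟩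
      refine late m ((hT3 (min T T3) (min_le_right _ _)).2 m ?_)
      exact prop_back L2 (min_le_left T T3) (hT T le_rfl)
    · refine no_multiple L2 ⟨T3, fun t ht => ⟨(hT3 t ht).1, fun h => ?_⟩⟩ E2
      obtain ⟨T, hT⟩ := late (m + 2) ((hT3 t ht).2 _ h)
      obtain ⟨T1, hT1⟩ := E1
      exact (hT1 (min T T1) (min_le_right _ _)).2 (prop_back L1 (min_le_left T T1) (hT T le_rfl))
  refine ⟨fun t x h => main.1 t x ⟨sub_eq_zero.2 h.1, sub_eq_zero.2 h.2⟩,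
    fun t x h => main.2 t x ⟨sub_eq_zero.2 h.1, sub_eq_zero.2 h.2⟩, fun x t₁ t₂ h1 h2 => ?_⟩
  by_contra hne
  have hτ : t₂ - t₁ ≠ 0 := sub_ne_zero.2 (Ne.symm hne)
  obtain ⟨w2, w3, w4, w5, L3⟩ := linsol_of hf_reg hf_per (shift_classical hu (t₂ - t₁)) hu
  obtain ⟨n1, B1⟩ := asym_shift A1 hlamm.ne' hτ
    (Filter.tendsto_atBot_add_const_right _ _ Filter.tendsto_id)
  obtain ⟨n2, B2⟩ := asym_shift A2 hlamp.ne hτ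
    (Filter.tendsto_atTop_add_const_right _ _ Filter.tendsto_id)
  simp only [sub_sub_sub_cancel_right] at B1 B2
  have G1 : ∃ T, ∀ t ≤ T, (∀ x, ¬ (u (t + (t₂ - t₁)) x - u t x = 0 ∧
      deriv (u (t + (t₂ - t₁))) x - deriv (u t) x = 0)) ∧
      ¬ Alt (fun x => u (t + (t₂ - t₁)) x - u t x) (m + 2) := by
    obtain ⟨T, hT⟩ := Filter.eventually_atBot.1 (asym_good B1
      (fun t => mul_ne_zero (Real.exp_pos _).ne' n1) L3.per L3.dx hphimper hp1 hd1 hc1 ns1)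
    exact ⟨T, fun t ht => ⟨(hT t ht).1, fun h => nm ((hT t ht).2 _ h)⟩⟩
  have G2 : m = 0 ∨ ∃ T, ∀ t ≥ T, Alt (fun x => u (t + (t₂ - t₁)) x - u t x) m := by
    refine pm.imp id fun h => ?_
    exact Filter.eventually_atTop.1 (asym_alt B2
      (fun t => mul_ne_zero (Real.exp_pos _).ne' n2) hphipper h)
  refine no_multiple L3 G1 G2 t₁ x ?_
  simp only [add_sub_cancel]
  exact ⟨sub_eq_zero.2 h1.symm, sub_eq_zero.2 h2.symm⟩
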